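/- arXiv:1805.08821 — 2 statements merged into one kernel-verified Lean document; each statement's English description precedes it below -/
import Mathlib

section
/- For simply connected hyperbolic domains, weak convergence of the harmonic measures ω_{Ω_n}(w_n, ·) to ω_Ω(w, ·) (with w_n → w) implies Carathéodory convergence of (Ω_n, w_n) to (Ω, w). -/
/-!
Harmonic measure enters only through solutions of the Dirichlet problem: for continuous `f` with
values in `[0, 1]` there is a harmonic function `h` on `Ω`, continuous up to the boundary, with
boundary values `f`, and its value at the base point is `∫ f dμ`
(`dirichlet`, `harmonicMeasure_value`).

The domains may be unbounded, and no boundary regularity is assumed, so the existence of `h` is part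
of the proof. It is obtained by Perron's method (`perron`), which needs the Dirichlet problem on a
disc (`disc_dirichlet`), and from barriers. For `x ∉ Ω`, a holomorphic branch of `log (z - x)` sends
`Ω ∩ ball x R` into a half-plane, where the Poisson integral of a set of length at most `2π`
serves as barrier (`exists_barrier`). Its bound `2π / log (R / |z - x|)` is the same for all simply
connected domains, which makes the argument uniform in `n`.

* Let `K ⊆ Ωl` be compact, and let `f` be `min 1 (dist (·, Ωlᶜ))`, so that `∫ f dν = 0`. The solutions
  `u n` on `Ω n` tend to `0` at `w n`. Where `f` is positive, `u n` is bounded below at points close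
  to the complement of `Ω n` (`dirichlet_lower`). Hence, near `wl`, the complement of `Ω n` keeps at
  a distance, and by Harnack's inequality `u n → 0` on a whole disc. The set of points having a
  disc of this kind is open and relatively closed in `Ωl`, so it is `Ωl`
  (`compact_eventually_subset`).
* Let `U ∋ wl` be open and connected with `U ⊆ Ω n` infinitely often. If `U ⊈ Ωl`, then `U` contains a
  point of `∂Ωl`. A bump function supported in `U` around this point has integral `0` against
  `μ n` for infinitely many `n`, hence against `ν`; its harmonic extension to `Ωl` vanishes at `wl`,
  hence everywhere, although its boundary values do not (`subset_of_frequently_subset`).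
-/

open MeasureTheory Metric Filter Topology

noncomputable section

/-- Mean value property over balls: the notion of harmonicity used here. -/
def HasMVP (h : ℂ → ℝ) (Ω : Set ℂ) : Prop :=
  ∀ z ∈ Ω, ∀ r : ℝ, 0 < r → closedBall z r ⊆ Ω →
    h z = ⨍ x in ball z r, h x

/-- `μ` is the harmonic measure of the domain `Ω` at the point `w`:
a probability measure on `∂Ω` reproducing values of bounded harmonic functions
continuous up to the boundary. -/
def IsHarmonicMeasure (Ω : Set ℂ) (w : ℂ) (μ : Measure ℂ) : Prop :=
  IsProbabilityMeasure μ ∧ μ (frontier Ω)ᶜ = 0 ∧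
  ∀ h : ℂ → ℝ, ContinuousOn h (closure Ω) → (∃ M, ∀ x, |h x| ≤ M) →
    HasMVP h Ω → h w = ∫ x, h x ∂μ

/-- Carathéodory convergence of pointed domains. -/
def CaratheodoryConv (Ω : ℕ → Set ℂ) (w : ℕ → ℂ) (Ωl : Set ℂ) (wl : ℂ) : Prop :=
  Tendsto w atTop (nhds wl) ∧
  (∀ K : Set ℂ, IsCompact K → K ⊆ Ωl → ∀ᶠ n in atTop, K ⊆ Ω n) ∧
  (∀ U : Set ℂ, IsOpen U → IsConnected U → wl ∈ U →
    (∃ᶠ n in atTop, U ⊆ Ω n) → U ⊆ Ωl)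

/-- `(Ω n, w n)` and `(Ωl, wl)` have arbitrarily good common interior approximations. -/
def CommonInteriorApprox (Ω : ℕ → Set ℂ) (w : ℕ → ℂ) (Ωl : Set ℂ) (wl : ℂ) : Prop :=
  Tendsto w atTop (nhds wl) ∧
  ∀ ε : ℝ, 0 < ε → ∃ N : ℕ, ∃ K : Set ℂ, IsClosed K ∧ IsConnected K ∧ wl ∈ K ∧
    K ⊆ Ωl ∧ (∀ n, N ≤ n → K ⊆ Ω n) ∧
    ∀ x ∈ frontier K, infDist x (frontier Ωl) < ε ∧
      ∀ n, N ≤ n → infDist x (frontier (Ω n)) < ε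

/-- Weak convergence of measures: integrals of bounded continuous functions converge. -/
def WeakConv (μ : ℕ → Measure ℂ) (ν : Measure ℂ) : Prop :=
  ∀ f : BoundedContinuousFunction ℂ ℝ, Tendsto (fun n => ∫ x, f x ∂(μ n)) atTop (nhds (∫ x, f x ∂ν))

/-- Uniform regularity of a sequence of domains, expressed via the families
`μ n z` of harmonic measures of `Ω n` at `z`. -/
def UniformlyRegular (Ω : ℕ → Set ℂ) (μ : ℕ → ℂ → Measure ℂ) : Prop :=
  ∀ δ : ℝ, 0 < δ → ∃ ε : ℝ, 0 < ε ∧ ∀ n, ∀ z ∈ Ω n,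
    infDist z (frontier (Ω n)) < ε → ENNReal.ofReal (1 - δ) < μ n z (ball z δ)

/-- A domain is regular iff the support of its harmonic measure (at any interior
point) is the whole boundary. -/
def IsRegularDomain (Ω : Set ℂ) (ν : ℂ → Measure ℂ) : Prop :=
  ∀ w ∈ Ω, ∀ x ∈ frontier Ω, ∀ r : ℝ, 0 < r → 0 < ν w (ball x r)

/-! ### Averages over discs -/

theorem avg_eq (z : ℂ) {r : ℝ} (hr : 0 < r) (h : ℂ → ℝ) :
    ⨍ x in ball z r, h x = (Real.pi * r ^ 2)⁻¹ * ∫ x in ball z r, h x := by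
  rw [setAverage_eq, smul_eq_mul]
  congr 2
  rw [Measure.real, Complex.volume_ball]
  simp [hr.le, mul_comm]

theorem integrableOn_ball {h : ℂ → ℝ} {z : ℂ} {r : ℝ} (hc : ContinuousOn h (closedBall z r)) :
    IntegrableOn h (ball z r) :=
  (hc.integrableOn_compact (isCompact_closedBall z r)).mono_set ball_subset_closedBall

theorem avg_const (z : ℂ) {r : ℝ} (hr : 0 < r) (c : ℝ) : ⨍ _x in ball z r, c = c :=
  setAverage_const (measure_ball_pos _ _ hr).ne' measure_ball_lt_top.ne c

theorem avg_mono {g h : ℂ → ℝ} {z : ℂ} {r : ℝ} (hr : 0 < r)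
    (hg : ContinuousOn g (closedBall z r)) (hh : ContinuousOn h (closedBall z r))
    (hgh : ∀ x ∈ ball z r, g x ≤ h x) : ⨍ x in ball z r, g x ≤ ⨍ x in ball z r, h x := by
  rw [avg_eq z hr, avg_eq z hr]
  exact mul_le_mul_of_nonneg_left (setIntegral_mono_on (integrableOn_ball hg)
    (integrableOn_ball hh) measurableSet_ball hgh) (by positivity)

theorem avg_congr {g h : ℂ → ℝ} {z : ℂ} {r : ℝ} (hgh : ∀ x ∈ ball z r, g x = h x) :
    ⨍ x in ball z r, g x = ⨍ x in ball z r, h x := by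
  rw [setAverage_eq, setAverage_eq, setIntegral_congr_fun measurableSet_ball hgh]

theorem avg_add {g h : ℂ → ℝ} {z : ℂ} {r : ℝ}
    (hg : ContinuousOn g (closedBall z r)) (hh : ContinuousOn h (closedBall z r)) :
    ⨍ x in ball z r, (g x + h x) = (⨍ x in ball z r, g x) + ⨍ x in ball z r, h x := by
  rw [setAverage_eq, setAverage_eq, setAverage_eq,
    integral_add (integrableOn_ball hg) (integrableOn_ball hh), smul_add]

theorem avg_neg (g : ℂ → ℝ) (z : ℂ) (r : ℝ) :
    ⨍ x in ball z r, -g x = -⨍ x in ball z r, g x := by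
  rw [setAverage_eq, setAverage_eq, integral_neg, smul_neg]

/-- Integration in polar coordinates: a mean value property over circles passes to discs. -/
theorem avg_of_circleAverage {g : ℂ → ℝ} {c : ℂ} {R : ℝ} (hR : 0 < R)
    (hg : ContinuousOn g (closedBall c R))
    (hav : ∀ ρ, 0 < ρ → ρ < R → Real.circleAverage g c ρ = g c) :
    ⨍ x in ball c R, g x = g c := by
  have hint : IntegrableOn g (ball c R) := integrableOn_ball hg
  set G : ℂ → ℝ := fun z => (ball (0 : ℂ) R).indicator (fun z => g (c + z)) z with hG
  have h1 : ∫ x in ball c R, g x = ∫ z, G z := by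
    rw [← integral_indicator measurableSet_ball, ← integral_add_left_eq_self _ c]
    refine integral_congr_ae (Eventually.of_forall fun z => ?_)
    simp only [hG, Set.indicator, mem_ball, dist_self_add_left, dist_zero_right]
  have hin : ∀ p : ℝ × ℝ, 0 < p.1 →
      (Complex.polarCoord.symm p ∈ ball (0 : ℂ) R ↔ p.1 < R) := by
    intro p hp
    rw [mem_ball_zero_iff, Complex.norm_polarCoord_symm, abs_of_pos hp]
  have hcm : ∀ p : ℝ × ℝ, c + Complex.polarCoord.symm p = circleMap c p.1 p.2 := by
    intro p
    rw [Complex.polarCoord_symm_apply, circleMap, Complex.exp_mul_I]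
    push_cast; ring
  have hcont : ContinuousOn (fun p : ℝ × ℝ => p.1 * g (circleMap c p.1 p.2))
      (Set.Icc 0 R ×ˢ Set.Icc (-Real.pi) Real.pi) := by
    refine continuousOn_fst.mul (hg.comp (by unfold circleMap; fun_prop) ?_)
    rintro ⟨a, b⟩ ⟨⟨ha, ha'⟩, -⟩
    change circleMap c a b ∈ closedBall c R
    rw [mem_closedBall, dist_eq_norm, circleMap_sub_center, norm_circleMap_zero,
      abs_of_nonneg ha]
    exact ha'
  have hinto : IntegrableOn (fun p : ℝ × ℝ => p.1 * g (circleMap c p.1 p.2))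
      (Set.Ioo 0 R ×ˢ Set.Ioo (-Real.pi) Real.pi) (volume.prod volume) :=
    (hcont.integrableOn_compact (isCompact_Icc.prod isCompact_Icc)).mono_set
      (Set.prod_mono Set.Ioo_subset_Icc_self Set.Ioo_subset_Icc_self)
  have h2 : ∫ z, G z = ∫ p in Set.Ioo 0 R ×ˢ Set.Ioo (-Real.pi) Real.pi,
      p.1 * g (circleMap c p.1 p.2) ∂(volume.prod volume) := by
    rw [← Complex.integral_comp_polarCoord_symm, polarCoord_target,
      ← integral_indicator (measurableSet_Ioi.prod measurableSet_Ioo),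
      ← integral_indicator (measurableSet_Ioo.prod measurableSet_Ioo), ← Measure.volume_eq_prod]
    refine integral_congr_ae (Eventually.of_forall fun p => ?_)
    simp only [Set.indicator, hG, smul_eq_mul, Set.mem_prod, Set.mem_Ioi]
    by_cases hp : 0 < p.1
    · simp only [hp, true_and, hin p hp, hcm, Set.mem_Ioo]
      by_cases h3 : p.1 < R <;> simp [h3]
    · simp [hp]
  have h3 : ∀ ρ ∈ Set.Ioo 0 R, ∫ θ in Set.Ioo (-Real.pi) Real.pi, ρ * g (circleMap c ρ θ)
      = ρ * (2 * Real.pi * g c) := by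
    intro ρ hρ
    rw [integral_const_mul]
    congr 1
    have := hav ρ hρ.1 hρ.2
    rw [Real.circleAverage_def, smul_eq_mul] at this
    have hper := ((periodic_circleMap c ρ).comp g).intervalIntegral_add_eq (-Real.pi) 0
    have e1 : -Real.pi + 2 * Real.pi = Real.pi := by ring
    rw [e1, zero_add] at hper
    rw [← integral_Ioc_eq_integral_Ioo, ← intervalIntegral.integral_of_le (by linarith [Real.pi_pos])]
    have h4 : ∫ x in (-Real.pi)..Real.pi, g (circleMap c ρ x) = ∫ x in (0)..2 * Real.pi, g (circleMap c ρ x) := hper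
    rw [h4, ← this]
    field_simp
  rw [avg_eq c hR, h1, h2, setIntegral_prod _ hinto,
    setIntegral_congr_fun measurableSet_Ioo h3, integral_mul_const,
    ← integral_Ioc_eq_integral_Ioo, ← intervalIntegral.integral_of_le hR.le, integral_id]
  field_simp
  ring

/-- Real parts of holomorphic functions are harmonic. -/
theorem hasMVP_re {F : ℂ → ℂ} {U : Set ℂ} (hF : DifferentiableOn ℂ F U) :
    HasMVP (fun z => (F z).re) U := by
  intro z _ r hr hsub
  have hFc : ContinuousOn F (closedBall z r) := hF.continuousOn.mono hsub
  refine (avg_of_circleAverage (g := fun z => (F z).re) hr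
    (Complex.continuous_re.comp_continuousOn hFc) ?_).symm
  intro ρ hρ hρr
  have hsub' : closedBall z |ρ| ⊆ U := by
    rw [abs_of_pos hρ]; exact (closedBall_subset_closedBall hρr.le).trans hsub
  have h1 : Real.circleAverage F z ρ = F z := by
    refine DiffContOnCl.circleAverage ⟨hF.mono (ball_subset_closedBall.trans hsub'), ?_⟩
    exact hF.continuousOn.mono (closure_ball_subset_closedBall.trans hsub')
  have h2 : CircleIntegrable F z ρ :=
    (hF.continuousOn.mono (sphere_subset_closedBall.trans hsub')).circleIntegrable'
  have := Complex.reCLM.circleAverage_comp_comm h2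
  rw [h1] at this
  exact this

/-- Harnack's inequality. The area of `ball y (s - d)`, which lies inside `ball y' s`, is
compared with that of `ball y' s`. -/
theorem harnack {h : ℂ → ℝ} {Ω : Set ℂ} (hc : ContinuousOn h Ω) (hm : HasMVP h Ω)
    (h0 : ∀ z ∈ Ω, 0 ≤ h z) {y y' : ℂ} {s d : ℝ} (hs : closedBall y' s ⊆ Ω)
    (hd : dist y y' ≤ d) (hds : d < s) : (1 - d / s) ^ 2 * h y ≤ h y' := by
  have hd0 : 0 ≤ d := dist_nonneg.trans hd
  have hs0 : 0 < s := hd0.trans_lt hds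
  have hsub : closedBall y (s - d) ⊆ closedBall y' s :=
    closedBall_subset_closedBall' (by linarith)
  have hy : y ∈ Ω := hs (mem_closedBall.2 (by linarith))
  have hy' : y' ∈ Ω := hs (mem_closedBall_self hs0.le)
  have hsub2 : ball y (s - d) ⊆ ball y' s := ball_subset_ball' (by linarith)
  rw [hm y hy (s - d) (by linarith) (hsub.trans hs), hm y' hy' s hs0 hs, avg_eq _ (by linarith),
    avg_eq _ hs0]
  have hle : ∫ x in ball y (s - d), h x ≤ ∫ x in ball y' s, h x := by
    refine setIntegral_mono_set (integrableOn_ball (hc.mono hs)) ?_ hsub2.eventuallyLE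
    exact (ae_restrict_iff' measurableSet_ball).2
      (Eventually.of_forall fun x hx => h0 x (hs (ball_subset_closedBall hx)))
  have hne : s - d ≠ 0 := by linarith
  have : (1 - d / s) ^ 2 * ((Real.pi * (s - d) ^ 2)⁻¹ * ∫ x in ball y (s - d), h x)
      = (Real.pi * s ^ 2)⁻¹ * ∫ x in ball y (s - d), h x := by
    field_simp
  rw [this]
  gcongr

theorem HasMVP.mono {h : ℂ → ℝ} {U V : Set ℂ} (hm : HasMVP h V) (hUV : U ⊆ V) : HasMVP h U :=
  fun z hz r hr hs => hm z (hUV hz) r hr (hs.trans hUV)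

/-! ### Subharmonic functions -/

/-- Local form of subharmonicity: `v` is continuous on `Ω` and, at each point of `Ω`, at most its mean
over all sufficiently small discs. Superharmonicity of `v` is expressed as `SubMV (-v) Ω`. -/
def SubMV (v : ℂ → ℝ) (Ω : Set ℂ) : Prop :=
  ContinuousOn v Ω ∧ ∀ z ∈ Ω, ∀ᶠ r in 𝓝[>] (0 : ℝ), v z ≤ ⨍ x in ball z r, v x

theorem eventually_closedBall {Ω : Set ℂ} {z : ℂ} (h : Ω ∈ 𝓝 z) :
    ∀ᶠ r in 𝓝[>] (0 : ℝ), 0 < r ∧ closedBall z r ⊆ Ω := by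
  obtain ⟨ε, hε, hs⟩ := nhds_basis_closedBall.mem_iff.1 h
  filter_upwards [Ioc_mem_nhdsGT hε] with r hr
  exact ⟨hr.1, (closedBall_subset_closedBall hr.2).trans hs⟩

theorem SubMV.add {v w : ℂ → ℝ} {Ω : Set ℂ} (hΩ : IsOpen Ω) (hv : SubMV v Ω) (hw : SubMV w Ω) :
    SubMV (fun z => v z + w z) Ω := by
  refine ⟨hv.1.add hw.1, fun z hz => ?_⟩
  filter_upwards [hv.2 z hz, hw.2 z hz, eventually_closedBall (hΩ.mem_nhds hz)] with r h1 h2 h3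
  rw [avg_add (hv.1.mono h3.2) (hw.1.mono h3.2)]
  linarith

theorem SubMV.max {v w : ℂ → ℝ} {Ω : Set ℂ} (hΩ : IsOpen Ω) (hv : SubMV v Ω) (hw : SubMV w Ω) :
    SubMV (fun z => max (v z) (w z)) Ω := by
  have hc : ContinuousOn (fun z => Max.max (v z) (w z)) Ω := hv.1.sup hw.1
  refine ⟨hc, fun z hz => ?_⟩
  filter_upwards [hv.2 z hz, hw.2 z hz, eventually_closedBall (hΩ.mem_nhds hz)] with r h1 h2 h3
  refine max_le (h1.trans ?_) (h2.trans ?_)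
  · exact avg_mono h3.1 (hv.1.mono h3.2) (hc.mono h3.2) fun x _ => le_max_left _ _
  · exact avg_mono h3.1 (hw.1.mono h3.2) (hc.mono h3.2) fun x _ => le_max_right _ _

theorem subMV_const (c : ℝ) (Ω : Set ℂ) : SubMV (fun _ => c) Ω := by
  refine ⟨continuousOn_const, fun z _ => ?_⟩
  filter_upwards [self_mem_nhdsWithin] with r hr
  rw [avg_const z hr]

theorem HasMVP.subMV {h : ℂ → ℝ} {Ω : Set ℂ} (hΩ : IsOpen Ω) (hc : ContinuousOn h Ω)
    (hm : HasMVP h Ω) : SubMV h Ω := by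
  refine ⟨hc, fun z hz => ?_⟩
  filter_upwards [eventually_closedBall (hΩ.mem_nhds hz)] with r h3
  exact (hm z hz r h3.1 h3.2).le

theorem HasMVP.subMV_neg {h : ℂ → ℝ} {Ω : Set ℂ} (hΩ : IsOpen Ω) (hc : ContinuousOn h Ω)
    (hm : HasMVP h Ω) : SubMV (fun z => -h z) Ω := by
  refine ⟨hc.neg, fun z hz => ?_⟩
  filter_upwards [eventually_closedBall (hΩ.mem_nhds hz)] with r h3
  rw [avg_neg, hm z hz r h3.1 h3.2]

theorem SubMV.mono {v : ℂ → ℝ} {U V : Set ℂ} (h : SubMV v V) (hUV : U ⊆ V) : SubMV v U :=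
  ⟨h.1.mono hUV, fun z hz => h.2 z (hUV hz)⟩

/-- Maximum principle on a disc. Otherwise, a maximum point farthest from the centre would have
points on a small surrounding disc at which the function is strictly below its maximum. -/
theorem max_principle {g : ℂ → ℝ} {c : ℂ} {R : ℝ} (hc : ContinuousOn g (closedBall c R))
    (hg : SubMV g (ball c R)) (hS : ∀ x ∈ sphere c R, g x ≤ 0) :
    ∀ x ∈ closedBall c R, g x ≤ 0 := by
  intro x0 hx0
  by_contra! hpos
  obtain ⟨m, hm, hmax⟩ := (isCompact_closedBall c R).exists_isMaxOn ⟨x0, hx0⟩ hc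
  have hMpos : 0 < g m := hpos.trans_le (hmax hx0)
  set M := g m with hM
  have hKc : IsCompact (closedBall c R ∩ g ⁻¹' {M}) :=
    (isCompact_closedBall c R).of_isClosed_subset
      (hc.preimage_isClosed_of_isClosed isClosed_closedBall isClosed_singleton)
      Set.inter_subset_left
  obtain ⟨p, ⟨hp, hpM⟩, hpfar⟩ := hKc.exists_isMaxOn ⟨m, hm, rfl⟩
    (f := fun z => dist z c) (by fun_prop)
  have hpM' : g p = M := hpM
  have hpb : p ∈ ball c R := by
    rcases (mem_closedBall.1 hp).lt_or_eq with h | h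
    · exact h
    · have := hS p h; linarith
  obtain ⟨r, hr, hr0, hrs⟩ := ((hg.2 p hpb).and
    (eventually_closedBall (isOpen_ball.mem_nhds hpb))).exists
  have hle : ∀ x ∈ ball p r, g x ≤ M := fun x hx =>
    hmax (ball_subset_closedBall (hrs (ball_subset_closedBall hx)))
  have hgc : ContinuousOn g (closedBall p r) := hg.1.mono hrs
  have hint : IntegrableOn (fun x => M - g x) (ball p r) :=
    integrableOn_ball (continuousOn_const.sub hgc)
  have hzero : ∫ x in ball p r, (M - g x) = 0 := by
    refine le_antisymm ?_ (setIntegral_nonneg measurableSet_ball fun x hx => by linarith [hle x hx])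
    have h1 : ⨍ x in ball p r, (M + -g x) ≤ 0 := by
      rw [avg_add (g := fun _ => M) (h := fun x => -g x) continuousOn_const hgc.neg, avg_neg, avg_const p hr0]
      linarith
    rw [avg_eq _ hr0] at h1
    have hk : 0 < (Real.pi * r ^ 2)⁻¹ := by positivity
    simpa [sub_eq_add_neg] using nonpos_of_mul_nonpos_right h1 hk
  have hae := (setIntegral_eq_zero_iff_of_nonneg_ae
    ((ae_restrict_iff' measurableSet_ball).2 (Eventually.of_forall fun x hx => by
      simpa using hle x hx)) hint).1 hzero
  have heq : Set.EqOn (fun x => M - g x) 0 (ball p r) :=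
    Measure.eqOn_open_of_ae_eq hae isOpen_ball
      (continuousOn_const.sub (hgc.mono ball_subset_closedBall)) continuousOn_const
  -- a point of the small disc farther from `c` than `p`
  obtain ⟨q, hq, hqd⟩ : ∃ q ∈ ball p r, dist p c < dist q c := by
    by_cases hpc : p = c
    · refine ⟨p + ((r / 2 : ℝ) : ℂ), ?_, ?_⟩
      · rw [mem_ball, dist_self_add_left, Complex.norm_real, Real.norm_of_nonneg (by linarith)]
        linarith
      · rw [hpc, dist_self, dist_self_add_left, Complex.norm_real,
          Real.norm_of_nonneg (by linarith)]
        linarith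
    · have hn : 0 < ‖p - c‖ := norm_pos_iff.2 (sub_ne_zero.2 hpc)
      have hk : 0 < r / (2 * ‖p - c‖) := by positivity
      refine ⟨p + ((r / (2 * ‖p - c‖) : ℝ) : ℂ) * (p - c), ?_, ?_⟩
      · rw [mem_ball, dist_self_add_left, norm_mul, Complex.norm_real, Real.norm_of_nonneg hk.le]
        have : r / (2 * ‖p - c‖) * ‖p - c‖ = r / 2 := by field_simp
        linarith
      · rw [dist_eq_norm, dist_eq_norm]
        have : p + ((r / (2 * ‖p - c‖) : ℝ) : ℂ) * (p - c) - c
            = ((1 + r / (2 * ‖p - c‖) : ℝ) : ℂ) * (p - c) := by push_cast; ring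
        rw [this, norm_mul, Complex.norm_real, Real.norm_of_nonneg (by positivity)]
        nlinarith
  have hqM : g q = M := by have := heq hq; simp at this; linarith
  have := hpfar (show q ∈ closedBall c R ∩ g ⁻¹' {M} from
    ⟨ball_subset_closedBall (hrs (ball_subset_closedBall hq)), hqM⟩)
  have h' : dist q c ≤ dist p c := this
  linarith

/-! ### The Dirichlet problem on a disc -/

/-- On the circle of centre `c` and radius `R`, the real part of `b ζ ^ n` is the real part of an
entire function; for negative `n`, because `b ζ ^ n` and its conjugate have the same real part. -/
theorem trig_extension (c : ℂ) {R : ℝ} (hR : 0 < R) (n : ℤ) (b : ℂ) :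
    ∃ F : ℂ → ℂ, Differentiable ℂ F ∧ ∀ ζ : Circle,
      (b * (ζ : ℂ) ^ n).re = (F (c + R * ζ)).re := by
  have hR' : (R : ℂ) ≠ 0 := by exact_mod_cast hR.ne'
  rcases n.eq_nat_or_neg with ⟨k, rfl | rfl⟩
  · refine ⟨fun z => b * ((z - c) / R) ^ k, by fun_prop, fun ζ => ?_⟩
    simp [hR']
  · refine ⟨fun z => (starRingEnd ℂ) b * ((z - c) / R) ^ k, by fun_prop, fun ζ => ?_⟩
    have : b * (ζ : ℂ) ^ (-(k : ℤ)) = (starRingEnd ℂ) ((starRingEnd ℂ) b * (ζ : ℂ) ^ k) := by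
      rw [zpow_neg, zpow_natCast, map_mul, map_pow, Complex.conj_conj, ← Circle.coe_inv_eq_conj]
      simp
    rw [this, Complex.conj_re]
    simp [hR']

/-- Real parts of entire functions are uniformly dense in the continuous functions on a circle:
on the circle, the real part of a trigonometric polynomial is the real part of a polynomial. -/
theorem sphere_approx {v : ℂ → ℝ} {c : ℂ} {R : ℝ} (hR : 0 < R)
    (hv : ContinuousOn v (sphere c R)) {ε : ℝ} (hε : 0 < ε) :
    ∃ F : ℂ → ℂ, Differentiable ℂ F ∧ ∀ x ∈ sphere c R, |v x - (F x).re| ≤ ε := by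
  have : Fact (0 < 2 * Real.pi) := ⟨Real.two_pi_pos⟩
  have hmem : ∀ ζ : Circle, c + R * (ζ : ℂ) ∈ sphere c R := fun ζ => by
    rw [mem_sphere, dist_self_add_left, norm_mul, Circle.norm_coe, Complex.norm_real,
      Real.norm_of_nonneg hR.le, mul_one]
  let g : C(AddCircle (2 * Real.pi), ℂ) :=
    ⟨fun t => (v (c + R * (AddCircle.toCircle t : ℂ)) : ℂ), by
      refine Complex.continuous_ofReal.comp (hv.comp_continuous ?_ fun t => hmem _)
      have := AddCircle.continuous_toCircle (T := 2 * Real.pi)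
      fun_prop⟩
  have hg : g ∈ (Submodule.span ℂ (Set.range (fourier (T := 2 * Real.pi)))).topologicalClosure := by
    rw [span_fourier_closure_eq_top]; trivial
  obtain ⟨q, hq, hqd⟩ := Metric.mem_closure_iff.1 hg ε hε
  -- complex multiples of a member of the span must be tracked along the induction
  have key : ∀ q ∈ Submodule.span ℂ (Set.range (fourier (T := 2 * Real.pi))), ∀ b : ℂ,
      ∃ F : ℂ → ℂ, Differentiable ℂ F ∧
        ∀ t, (b * q t).re = (F (c + R * (AddCircle.toCircle t : ℂ))).re := by
    intro q hq
    induction hq using Submodule.span_induction with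
    | mem x hx =>
      obtain ⟨n, rfl⟩ := hx
      intro b
      obtain ⟨F, hF, h⟩ := trig_extension c hR n b
      refine ⟨F, hF, fun t => ?_⟩
      rw [← h, fourier_apply, AddCircle.toCircle_zsmul, Circle.coe_zpow]
    | zero => exact fun b => ⟨fun _ => 0, by fun_prop, by simp⟩
    | add x y _ _ hx hy =>
      intro b
      obtain ⟨F, hF, h⟩ := hx b
      obtain ⟨G, hG, h'⟩ := hy b
      refine ⟨fun z => F z + G z, hF.add hG, fun t => ?_⟩
      rw [Complex.add_re, ← h, ← h', ContinuousMap.add_apply, mul_add, Complex.add_re]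
    | smul a x _ hx =>
      intro b
      obtain ⟨F, hF, h⟩ := hx (b * a)
      refine ⟨F, hF, fun t => ?_⟩
      rw [← h, ContinuousMap.smul_apply, smul_eq_mul, mul_assoc]
  obtain ⟨F, hF, h⟩ := key q hq 1
  refine ⟨F, hF, fun x hx => ?_⟩
  have hx' : ‖x - c‖ = R := by rwa [mem_sphere, dist_eq_norm] at hx
  have hR' : (R : ℂ) ≠ 0 := by exact_mod_cast hR.ne'
  obtain ⟨ζ, hζ⟩ : ∃ ζ : Circle, c + R * (ζ : ℂ) = x := by
    refine ⟨⟨(x - c) / R, ?_⟩, ?_⟩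
    · change (x - c) / (R : ℂ) ∈ sphere (0 : ℂ) 1
      rw [mem_sphere_zero_iff_norm]; simp [hx', abs_of_pos hR, hR.ne']
    · simp only
      field_simp
      ring
  obtain ⟨t, rfl⟩ := (AddCircle.homeomorphCircle Real.two_pi_pos.ne').surjective ζ
  rw [AddCircle.homeomorphCircle_apply] at hζ
  have h1 := h t
  rw [one_mul, hζ] at h1
  rw [← h1]
  have h2 : dist (g t) (q t) ≤ ε := (ContinuousMap.dist_apply_le_dist t).trans hqd.le
  have h3 : g t = (v x : ℂ) := by
    change (v (c + R * (AddCircle.toCircle t : ℂ)) : ℂ) = _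
    rw [hζ]
  rw [h3, dist_eq_norm] at h2
  refine le_trans ?_ h2
  have := Complex.abs_re_le_norm ((v x : ℂ) - q t)
  simpa using this

/-- The Dirichlet problem on a disc. -/
theorem disc_dirichlet {v : ℂ → ℝ} {c : ℂ} {R : ℝ} (hR : 0 < R)
    (hv : ContinuousOn v (sphere c R)) :
    ∃ P : ℂ → ℝ, ContinuousOn P (closedBall c R) ∧ (∀ x ∈ sphere c R, P x = v x) ∧
      HasMVP P (ball c R) := by
  have hpos : ∀ n : ℕ, (0 : ℝ) < 1 / ((n : ℝ) + 1) := fun n => by positivity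
  choose F hF hFv using fun n : ℕ => sphere_approx hR hv (hpos n)
  set u : ℕ → ℂ → ℝ := fun n z => (F n z).re with hu
  have huc : ∀ n, Continuous (u n) := fun n => Complex.continuous_re.comp (hF n).continuous
  have hum : ∀ n, HasMVP (u n) (ball c R) := fun n => hasMVP_re (hF n).differentiableOn
  have hdiff : ∀ n m, ∀ x ∈ closedBall c R,
      u n x - u m x ≤ 1 / ((n : ℝ) + 1) + 1 / ((m : ℝ) + 1) := by
    intro n m x hx
    have := max_principle (c := c) (R := R)
      (g := fun z => (u n z + -u m z) + -(1 / ((n : ℝ) + 1) + 1 / ((m : ℝ) + 1)))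
      ((((huc n).add (huc m).neg).add continuous_const).continuousOn)
      ((((hum n).subMV isOpen_ball (huc n).continuousOn).add isOpen_ball
        ((hum m).subMV_neg isOpen_ball (huc m).continuousOn)).add isOpen_ball (subMV_const _ _))
      (fun y hy => by
        have h1 := abs_le.1 (hFv n y hy)
        have h2 := abs_le.1 (hFv m y hy)
        simp only [hu]
        linarith [h1.1, h2.2]) x hx
    linarith
  have hlim := tendsto_one_div_add_atTop_nhds_zero_nat (𝕜 := ℝ)
  have hcau : UniformCauchySeqOn u atTop (closedBall c R) := by
    rw [Metric.uniformCauchySeqOn_iff]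
    intro ε hε
    obtain ⟨N, hN⟩ := eventually_atTop.1 (hlim.eventually_lt_const (half_pos hε))
    refine ⟨N, fun m hm n hn x hx => ?_⟩
    rw [Real.dist_eq, abs_lt]
    have := hdiff n m x hx
    have := hdiff m n x hx
    have := hN n hn
    have := hN m hm
    constructor <;> linarith
  have hex : ∀ x ∈ closedBall c R, ∃ l, Tendsto (fun n => u n x) atTop (𝓝 l) := fun x hx =>
    cauchySeq_tendsto_of_complete (hcau.cauchySeq hx)
  choose! P hP using hex
  have hunif : TendstoUniformlyOn u P atTop (closedBall c R) :=
    hcau.tendstoUniformlyOn_of_tendsto hP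
  have hPc : ContinuousOn P (closedBall c R) :=
    hunif.continuousOn (Frequently.of_forall fun n => (huc n).continuousOn)
  refine ⟨P, hPc, fun x hx => ?_, fun z hz r hr hs => ?_⟩
  · refine tendsto_nhds_unique (hP x (sphere_subset_closedBall hx)) ?_
    rw [tendsto_iff_dist_tendsto_zero]
    refine squeeze_zero (fun _ => dist_nonneg) (fun n => ?_) hlim
    rw [dist_comm, Real.dist_eq]
    exact hFv n x hx
  · have hs' : closedBall z r ⊆ closedBall c R := hs.trans ball_subset_closedBall
    refine eq_of_forall_dist_le fun ε hε => ?_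
    obtain ⟨n, hn⟩ := (Metric.tendstoUniformlyOn_iff.1 hunif (ε / 2) (half_pos hε)).exists
    have h1 : ∀ x ∈ closedBall c R, P x ≤ u n x + ε / 2 ∧ u n x ≤ P x + ε / 2 := by
      intro x hx
      have := abs_lt.1 (Real.dist_eq _ _ ▸ hn x hx)
      constructor <;> linarith [this.1, this.2]
    have huz := hum n z hz r hr hs
    have h2 := avg_mono (h := fun x => u n x + ε / 2) hr (hPc.mono hs') ((huc n).add continuous_const).continuousOn
      fun x hx => (h1 x (hs' (ball_subset_closedBall hx))).1
    have h3 := avg_mono (h := fun x => P x + ε / 2) hr (huc n).continuousOn ((hPc.mono hs').add continuousOn_const)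
      fun x hx => (h1 x (hs' (ball_subset_closedBall hx))).2
    rw [avg_add (g := u n) (h := fun _ => ε / 2) (huc n).continuousOn continuousOn_const,
      avg_const z hr] at h2
    rw [avg_add (g := P) (h := fun _ => ε / 2) (hPc.mono hs') continuousOn_const,
      avg_const z hr] at h3
    have h4 := h1 z (ball_subset_closedBall hz)
    rw [Real.dist_eq, abs_le]
    constructor <;> linarith [h4.1, h4.2]

/-- Replacing a subharmonic function inside a disc by the harmonic function with the same values
on the bounding circle: the result is again subharmonic, is larger, and stays below every
superharmonic function that dominates the original one. -/
theorem poisson_modification {v : ℂ → ℝ} {Ω : Set ℂ} (hΩ : IsOpen Ω) (hv : SubMV v Ω)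
    {c : ℂ} {R : ℝ} (hR : 0 < R) (hs : closedBall c R ⊆ Ω) :
    ∃ v' : ℂ → ℝ, SubMV v' Ω ∧ (∀ z, v z ≤ v' z) ∧ HasMVP v' (ball c R) ∧
      ∀ W : ℂ → ℝ, SubMV (fun z => -W z) Ω → (∀ z ∈ Ω, v z ≤ W z) → ∀ z ∈ Ω, v' z ≤ W z := by
  classical
  obtain ⟨P, hPc, hPs, hPm⟩ := disc_dirichlet hR (hv.1.mono (sphere_subset_closedBall.trans hs))
  have hPcb : ContinuousOn P (ball c R) := hPc.mono ball_subset_closedBall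
  have hbΩ : ball c R ⊆ Ω := ball_subset_closedBall.trans hs
  set v' : ℂ → ℝ := (closedBall c R).piecewise P v with hv'
  have hin : ∀ z ∈ closedBall c R, v' z = P z := fun z hz => Set.piecewise_eq_of_mem _ _ _ hz
  have hout : ∀ z, z ∉ ball c R → v' z = v z := by
    intro z hz
    by_cases h : z ∈ closedBall c R
    · have hzs : z ∈ sphere c R := by
        rw [mem_sphere]
        exact le_antisymm h (by simpa using hz)
      rw [hin z h, hPs z hzs]
    · exact Set.piecewise_eq_of_notMem _ _ _ h
  have hle : ∀ z, v z ≤ v' z := by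
    intro z
    by_cases h : z ∈ closedBall c R
    · rw [hin z h]
      have := max_principle (g := fun z => v z + -P z) ((hv.1.mono hs).add hPc.neg)
        ((hv.mono hbΩ).add isOpen_ball (hPm.subMV_neg isOpen_ball hPcb))
        (fun x hx => by simp [hPs x hx]) z h
      linarith
    · rw [hout z fun h' => h (ball_subset_closedBall h')]
  have hc' : ContinuousOn v' Ω := by
    have h1 : ContinuousOn v' (closedBall c R) := hPc.congr hin
    have h2 : ContinuousOn v' (Ω \ ball c R) :=
      (hv.1.mono Set.sdiff_subset).congr fun z hz => hout z hz.2
    intro z hz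
    have h3 : ContinuousWithinAt v' (closedBall c R ∪ (Ω \ ball c R)) z := by
      refine ContinuousWithinAt.union ?_ ?_
      · by_cases h : z ∈ closedBall c R
        · exact h1 z h
        · exact continuousWithinAt_of_notMem_closure (by rwa [isClosed_closedBall.closure_eq])
      · by_cases h : z ∈ ball c R
        · refine continuousWithinAt_of_notMem_closure fun h' => ?_
          obtain ⟨y, hy, hy'⟩ := mem_closure_iff.1 h' _ isOpen_ball h
          exact hy'.2 hy
        · exact h2 z ⟨hz, h⟩
    refine h3.mono fun x hx => ?_
    by_cases h : x ∈ ball c R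
    · exact Or.inl (ball_subset_closedBall h)
    · exact Or.inr ⟨hx, h⟩
  have hm' : HasMVP v' (ball c R) := by
    intro z hz r hr hzs
    rw [hin z (ball_subset_closedBall hz), hPm z hz r hr hzs]
    exact avg_congr fun x hx =>
      (hin x (ball_subset_closedBall (hzs (ball_subset_closedBall hx)))).symm
  refine ⟨v', ⟨hc', fun z hz => ?_⟩, hle, hm', fun W hW hvW z hz => ?_⟩
  · by_cases h : z ∈ ball c R
    · filter_upwards [eventually_closedBall (isOpen_ball.mem_nhds h)] with r hr
      exact (hm' z h r hr.1 hr.2).le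
    · filter_upwards [hv.2 z hz, eventually_closedBall (hΩ.mem_nhds hz)] with r hr hr'
      rw [hout z h]
      exact hr.trans (avg_mono hr'.1 (hv.1.mono hr'.2) (hc'.mono hr'.2) fun x _ => hle x)
  · by_cases h : z ∈ closedBall c R
    · have := max_principle (g := fun z => P z + -W z) (hPc.add (hW.1.mono hs))
        ((hPm.subMV isOpen_ball hPcb).add isOpen_ball (hW.mono hbΩ))
        (fun x hx => by
          have := hvW x (hs (sphere_subset_closedBall hx))
          simp only [hPs x hx]; linarith) z h
      rw [hin z h]; linarith
    · rw [hout z fun h' => h (ball_subset_closedBall h')]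
      exact hvW z hz

/-! ### Perron's method -/

/-- Perron's method. The supremum `u` of the subharmonic functions below the superharmonic family
`𝓦` is harmonic. Continuity comes from Harnack's inequality, and the mean value property
from Poisson modification together with the fact that the competitors are directed. -/
theorem perron {Ω : Set ℂ} (hΩ : IsOpen Ω) {𝓦 : Set (ℂ → ℝ)}
    (h𝓦 : ∀ W ∈ 𝓦, SubMV (fun z => -W z) Ω ∧ ∀ z ∈ Ω, 0 ≤ W z)
    (h1 : (fun _ => (1 : ℝ)) ∈ 𝓦) :
    ∃ u : ℂ → ℝ, ContinuousOn u Ω ∧ HasMVP u Ω ∧ (∀ z ∈ Ω, 0 ≤ u z) ∧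
      (∀ W ∈ 𝓦, ∀ z ∈ Ω, u z ≤ W z) ∧
      ∀ v, SubMV v Ω → (∀ W ∈ 𝓦, ∀ z ∈ Ω, v z ≤ W z) → ∀ z ∈ Ω, v z ≤ u z := by
  set 𝓕 : Set (ℂ → ℝ) :=
    {v | SubMV v Ω ∧ (∀ z ∈ Ω, 0 ≤ v z) ∧ ∀ W ∈ 𝓦, ∀ z ∈ Ω, v z ≤ W z} with h𝓕
  set u : ℂ → ℝ := fun z => sSup ((fun v : ℂ → ℝ => v z) '' 𝓕) with hu
  have hmax : ∀ v, SubMV v Ω → (∀ W ∈ 𝓦, ∀ z ∈ Ω, v z ≤ W z) →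
      (fun z => max (v z) 0) ∈ 𝓕 := fun v hv hvW =>
    ⟨hv.max hΩ (subMV_const 0 Ω), fun _ _ => le_max_right _ _,
      fun W hW z hz => max_le (hvW W hW z hz) ((h𝓦 W hW).2 z hz)⟩
  have h0 : (fun _ => (0 : ℝ)) ∈ 𝓕 :=
    ⟨subMV_const 0 Ω, fun _ _ => le_rfl, fun W hW => (h𝓦 W hW).2⟩
  have hsup : ∀ v ∈ 𝓕, ∀ v' ∈ 𝓕, (fun z => max (v z) (v' z)) ∈ 𝓕 := fun v hv v' hv' =>
    ⟨hv.1.max hΩ hv'.1, fun z hz => le_max_of_le_left (hv.2.1 z hz),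
      fun W hW z hz => max_le (hv.2.2 W hW z hz) (hv'.2.2 W hW z hz)⟩
  have hle : ∀ v ∈ 𝓕, ∀ z ∈ Ω, v z ≤ u z := fun v hv z hz =>
    le_csSup ⟨1, by rintro _ ⟨g, hg, rfl⟩; exact hg.2.2 _ h1 z hz⟩ ⟨v, hv, rfl⟩
  have hub : ∀ z b, (∀ v ∈ 𝓕, v z ≤ b) → u z ≤ b := fun z b hb =>
    csSup_le ⟨_, _, h0, rfl⟩ (by rintro _ ⟨g, hg, rfl⟩; exact hb g hg)
  have hlt : ∀ z, ∀ ε > 0, ∃ v ∈ 𝓕, u z - ε < v z := by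
    intro z ε hε
    obtain ⟨_, ⟨v, hv, rfl⟩, h⟩ := exists_lt_of_lt_csSup (⟨_, _, h0, rfl⟩ :
      ((fun v : ℂ → ℝ => v z) '' 𝓕).Nonempty) (show u z - ε < u z by linarith)
    exact ⟨v, hv, h⟩
  have hmod : ∀ v ∈ 𝓕, ∀ c R, 0 < R → closedBall c R ⊆ Ω →
      ∃ v' ∈ 𝓕, (∀ z, v z ≤ v' z) ∧ HasMVP v' (ball c R) := by
    intro v hv c R hR hs
    obtain ⟨v', h1, h2, h3, h4⟩ := poisson_modification hΩ hv.1 hR hs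
    exact ⟨v', ⟨h1, fun z hz => (hv.2.1 z hz).trans (h2 z),
      fun W hW => h4 W (h𝓦 W hW).1 (hv.2.2 W hW)⟩, h2, h3⟩
  -- Harnack's inequality for the modified competitors, which take values in `[0, 1]`
  have hlip : ∀ c R y y', 0 < R → closedBall c R ⊆ Ω → y ∈ ball c R →
      y' ∈ closedBall c (R / 4) → dist y y' < R / 2 →
      u y ≤ u y' + 2 * (dist y y' / (R / 2)) := by
    intro c R y y' hR hs hy hy' hd
    refine hub y _ fun v hv => ?_
    obtain ⟨v', hv', hvv', hm⟩ := hmod v hv c R hR hs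
    have hsb : ball c R ⊆ Ω := ball_subset_closedBall.trans hs
    have hsub : closedBall y' (R / 2) ⊆ ball c R := by
      refine closedBall_subset_ball' ?_
      have := mem_closedBall.1 hy'
      linarith
    have hh := harnack (hv'.1.1.mono hsb) hm (fun z hz => hv'.2.1 z (hsb hz)) hsub le_rfl hd
    have hy'Ω : y' ∈ Ω := hsb (hsub (mem_closedBall_self (by linarith)))
    have h2 := hle v' hv' y' hy'Ω
    have h3 := hvv' y
    have h4 := hv'.2.2 _ h1 y (hsb hy)
    have h5 := hv'.2.1 y (hsb hy)
    have h6 : 0 ≤ dist y y' / (R / 2) := by positivity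
    have h7 := mul_nonneg h6 (sub_nonneg.2 h4)
    have h8 := mul_nonneg (sq_nonneg (dist y y' / (R / 2))) h5
    linarith
  have hcont : ContinuousOn u Ω := by
    intro c hc
    obtain ⟨R, hR, hs⟩ := (eventually_closedBall (hΩ.mem_nhds hc)).exists
    refine ContinuousAt.continuousWithinAt ?_
    rw [ContinuousAt, tendsto_iff_dist_tendsto_zero]
    have hlim : Tendsto (fun y => 2 * (dist y c / (R / 2))) (𝓝 c) (𝓝 0) := by
      have : Continuous fun y => 2 * (dist y c / (R / 2)) := by fun_prop
      simpa using this.tendsto c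
    refine squeeze_zero' (Eventually.of_forall fun _ => dist_nonneg) ?_ hlim
    filter_upwards [closedBall_mem_nhds c (show 0 < R / 4 by linarith)] with y hy
    have hy' := mem_closedBall.1 hy
    have h2 := hlip c R y c hR hs (mem_ball.2 (by linarith)) (mem_closedBall_self (by linarith))
      (by linarith)
    have h3 := hlip c R c y hR hs (mem_ball_self hR) hy (by rw [dist_comm]; linarith)
    rw [dist_comm c y] at h3
    rw [Real.dist_eq, abs_le]
    constructor <;> linarith
  refine ⟨u, hcont, fun z hz r hr hs => ?_, fun z hz => hle _ h0 z hz,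
    fun W hW z hz => hub z _ fun v hv => hv.2.2 W hW z hz,
    fun v hv hvW z hz => (le_max_left _ _).trans (hle _ (hmax v hv hvW) z hz)⟩
  obtain ⟨R, hrR, hR⟩ : ∃ R, r < R ∧ closedBall z R ⊆ Ω := by
    obtain ⟨δ, hδ, h⟩ := (isCompact_closedBall z r).exists_cthickening_subset_open hΩ hs
    refine ⟨δ + r, by linarith, ?_⟩
    rwa [cthickening_closedBall hδ.le hr.le] at h
  have hsb : closedBall z r ⊆ ball z R := closedBall_subset_ball hrR
  have hzb : z ∈ ball z R := mem_ball_self (hr.trans hrR)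
  have hin : ∀ x ∈ ball z r, x ∈ Ω := fun x hx => hs (ball_subset_closedBall hx)
  refine le_antisymm (hub z _ fun v hv => ?_) (le_of_forall_pos_le_add fun ε hε => ?_)
  · obtain ⟨v', hv', hvv', hm⟩ := hmod v hv z R (hr.trans hrR) hR
    refine (hvv' z).trans ?_
    rw [hm z hzb r hr hsb]
    exact avg_mono hr (hv'.1.1.mono hs) (hcont.mono hs) fun x hx => hle v' hv' x (hin x hx)
  -- the competitors are directed, so by compactness a single one is within `ε` of `u` on the disc
  · obtain ⟨v, hv, hvu⟩ : ∃ v ∈ 𝓕, ∀ x ∈ closedBall z r, u x - ε ≤ v x := by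
      refine (isCompact_closedBall z r).induction_on
        (p := fun s => ∃ v ∈ 𝓕, ∀ x ∈ s, u x - ε ≤ v x) ⟨_, h0, by simp⟩ ?_ ?_ ?_
      · rintro s t hst ⟨v, hv, h⟩
        exact ⟨v, hv, fun x hx => h x (hst hx)⟩
      · rintro s t ⟨v, hv, h⟩ ⟨v', hv', h'⟩
        refine ⟨_, hsup v hv v' hv', fun x hx => ?_⟩
        rcases hx with hx | hx
        · exact (h x hx).trans (le_max_left _ _)
        · exact (h' x hx).trans (le_max_right _ _)
      · intro x hx
        obtain ⟨v, hv, h⟩ := hlt x ε hε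
        have hx' := hΩ.mem_nhds (hs hx)
        have hev : ∀ᶠ y in 𝓝 x, u y - ε < v y :=
          ((hcont.continuousAt hx').sub continuousAt_const).eventually_lt
            (hv.1.1.continuousAt hx') h
        exact ⟨_, mem_nhdsWithin_of_mem_nhds hev, v, hv, fun y hy => le_of_lt hy⟩
    obtain ⟨v', hv', hvv', hm⟩ := hmod v hv z R (hr.trans hrR) hR
    have h2 : ⨍ x in ball z r, u x ≤ ⨍ x in ball z r, (v' x + ε) :=
      avg_mono hr (hcont.mono hs) ((hv'.1.1.mono hs).add continuousOn_const) fun x hx => by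
        have := hvu x (ball_subset_closedBall hx)
        have := hvv' x
        linarith
    rw [avg_add (g := v') (h := fun _ => ε) (hv'.1.1.mono hs) continuousOn_const, avg_const z hr,
      ← hm z hzb r hr hsb] at h2
    exact h2.trans (by linarith [hle v' hv' z hz])

/-! ### Barriers -/

/-- A simply connected domain carries a holomorphic branch of `log (z - x)` for `x ∉ Ω`. -/
theorem exists_log_branch {Ω : Set ℂ} (hΩ : IsOpen Ω) (hsc : IsSimplyConnected Ω) {x : ℂ}
    (hx : x ∉ Ω) : ∃ L : ℂ → ℂ, DifferentiableOn ℂ L Ω ∧ ∀ z ∈ Ω, Complex.exp (L z) = z - x := by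
  obtain ⟨L, hL, hexp⟩ := Complex.exists_continuousOn_eqOn_exp_comp hsc hΩ
    (g := fun z => z - x) (by fun_prop) (by
      rintro ⟨z, hz, h⟩
      exact hx (sub_eq_zero.1 h ▸ hz))
  have hexp' : ∀ z ∈ Ω, Complex.exp (L z) = z - x := hexp
  refine ⟨L, fun z hz => DifferentiableAt.differentiableWithinAt ?_, hexp'⟩
  have h1 : HasDerivAt (fun y => Complex.exp y + x) (Complex.exp (L z)) (L z) :=
    (Complex.hasDerivAt_exp _).add_const x
  refine (h1.of_local_left_inverse (hL.continuousAt (hΩ.mem_nhds hz)) (Complex.exp_ne_zero _)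
    ?_).differentiableAt
  filter_upwards [hΩ.mem_nhds hz] with y hy
  rw [hexp' y hy]; ring

/-- A holomorphic function on the left half-plane. Its real part is `π` times the Poisson integral
of the indicator function of the set `E`, viewed as a subset of the imaginary axis. -/
def halfPlaneP (E : Set ℝ) (w : ℂ) : ℂ := ∫ t in E, (t * Complex.I - w)⁻¹

theorem le_norm_sub (t : ℝ) (w : ℂ) : -w.re ≤ ‖t * Complex.I - w‖ := by
  have := Complex.re_le_norm (t * Complex.I - w)
  simpa using this

theorem halfPlane_integrable {E : Set ℝ} (hE : volume E < ⊤) {w : ℂ} (hw : w.re < 0) :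
    IntegrableOn (fun t : ℝ => (t * Complex.I - w)⁻¹) E := by
  have hne : ∀ t : ℝ, t * Complex.I - w ≠ 0 := fun t h => by
    have := le_norm_sub t w
    rw [h, norm_zero] at this
    linarith
  have hc : Continuous fun t : ℝ => (t * Complex.I - w)⁻¹ :=
    Continuous.inv₀ (by fun_prop) hne
  refine Measure.integrableOn_of_bounded hE.ne hc.aestronglyMeasurable
    (M := (-w.re)⁻¹) (Eventually.of_forall fun t => ?_)
  rw [norm_inv]
  exact inv_anti₀ (by linarith) (le_norm_sub t w)

theorem halfPlane_differentiable {E : Set ℝ} (hE : volume E < ⊤) :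
    DifferentiableOn ℂ (halfPlaneP E) {w | w.re < 0} := by
  intro w hw
  have hw' : w.re < 0 := hw
  refine DifferentiableAt.differentiableWithinAt ?_
  have hne : ∀ (t : ℝ) (y : ℂ), y.re < w.re / 2 → t * Complex.I - y ≠ 0 := fun t y hy h => by
    have := le_norm_sub t y
    rw [h, norm_zero] at this
    linarith
  have hs : {y : ℂ | y.re < w.re / 2} ∈ 𝓝 w :=
    (isOpen_lt Complex.continuous_re continuous_const).mem_nhds (by
      change w.re < w.re / 2; linarith)
  have hfin : IsFiniteMeasure (volume.restrict E) := ⟨by simpa using hE⟩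
  refine (hasDerivAt_integral_of_dominated_loc_of_deriv_le (μ := volume.restrict E)
    (F := fun (y : ℂ) (t : ℝ) => (t * Complex.I - y)⁻¹)
    (F' := fun (y : ℂ) (t : ℝ) => ((t * Complex.I - y) ^ 2)⁻¹)
    (bound := fun _ => (((-w.re) / 2) ^ 2)⁻¹) hs ?_ (halfPlane_integrable hE hw') ?_ ?_
    (integrable_const _) ?_).2.differentiableAt
  · filter_upwards [hs] with y hy
    exact (Continuous.inv₀ (by fun_prop) fun t => hne t y hy).aestronglyMeasurable
  · exact (Continuous.inv₀ (by fun_prop) fun t =>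
      pow_ne_zero 2 (hne t w (by linarith))).aestronglyMeasurable
  · refine Eventually.of_forall fun t y hy => ?_
    have h1 := le_norm_sub t y
    have h2 : y.re < w.re / 2 := hy
    rw [norm_inv, norm_pow]
    refine inv_anti₀ (pow_pos (by linarith) 2) (pow_le_pow_left₀ (by linarith) (by linarith) 2)
  · refine Eventually.of_forall fun t y hy => ?_
    have h1 := ((hasDerivAt_id y).const_sub ((t : ℂ) * Complex.I)).inv (hne t y hy)
    rw [id_eq, neg_neg, one_div] at h1
    exact h1

theorem halfPlane_re {E : Set ℝ} (hE : volume E < ⊤) {w : ℂ} (hw : w.re < 0) :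
    (halfPlaneP E w).re = ∫ t in E, ((t * Complex.I - w)⁻¹).re :=
  (integral_re (halfPlane_integrable hE hw)).symm

theorem kernel_re (t : ℝ) (w : ℂ) :
    ((t * Complex.I - w)⁻¹).re = -w.re / (w.re ^ 2 + (t - w.im) ^ 2) := by
  rw [Complex.inv_re, Complex.normSq_apply]
  simp only [Complex.sub_re, Complex.mul_re, Complex.ofReal_re, Complex.I_re, Complex.ofReal_im,
    Complex.I_im, Complex.sub_im, Complex.mul_im]
  ring

theorem halfPlane_nonneg {E : Set ℝ} (hE : volume E < ⊤) {w : ℂ} (hw : w.re < 0) :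
    0 ≤ (halfPlaneP E w).re := by
  rw [halfPlane_re hE hw]
  refine integral_nonneg fun t => ?_
  rw [Pi.zero_apply, kernel_re]
  exact div_nonneg (by linarith) (by positivity)

theorem halfPlane_le {E : Set ℝ} (hE : volume E ≤ ENNReal.ofReal (2 * Real.pi)) {w : ℂ}
    (hw : w.re < 0) : (halfPlaneP E w).re * -w.re ≤ 2 * Real.pi := by
  have hlt : volume E < ⊤ := hE.trans_lt ENNReal.ofReal_lt_top
  have h1 : ‖halfPlaneP E w‖ ≤ (-w.re)⁻¹ * (volume E).toReal := by
    refine norm_setIntegral_le_of_norm_le_const hlt fun t _ => ?_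
    rw [norm_inv]
    exact inv_anti₀ (by linarith) (le_norm_sub t w)
  have h2 : (volume E).toReal ≤ 2 * Real.pi := ENNReal.toReal_le_of_le_ofReal (by positivity) hE
  have h3 := (Complex.re_le_norm _).trans h1
  have h4 : 0 < -w.re := by linarith
  calc (halfPlaneP E w).re * -w.re ≤ (-w.re)⁻¹ * (volume E).toReal * -w.re := by gcongr
    _ = (volume E).toReal := by rw [mul_right_comm, inv_mul_cancel₀ h4.ne', one_mul]
    _ ≤ _ := h2

/-- Where the interval of length `2 |Re w|` around height `Im w` lies in `E`, the kernel is at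
least `1 / (2 |Re w|)` on that interval. -/
theorem one_le_halfPlane {E : Set ℝ} (hE : volume E < ⊤) {w : ℂ}
    (hw : w.re < 0) (hsub : Set.Ioo (w.im + w.re) (w.im - w.re) ⊆ E) :
    1 ≤ (halfPlaneP E w).re := by
  rw [halfPlane_re hE hw]
  have hint : IntegrableOn (fun t : ℝ => ((t * Complex.I - w)⁻¹).re) E :=
    (halfPlane_integrable hE hw).re
  have h1 : ∫ t in Set.Ioo (w.im + w.re) (w.im - w.re), ((t * Complex.I - w)⁻¹).re ≤
      ∫ t in E, ((t * Complex.I - w)⁻¹).re := by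
    refine setIntegral_mono_set hint (Eventually.of_forall fun t => ?_) hsub.eventuallyLE
    change 0 ≤ ((t * Complex.I - w)⁻¹).re
    rw [kernel_re]
    exact div_nonneg (by linarith) (by positivity)
  refine le_trans ?_ h1
  have h2 : ∫ _t in Set.Ioo (w.im + w.re) (w.im - w.re), (2 * -w.re)⁻¹ = 1 := by
    rw [setIntegral_const, Measure.real, Real.volume_Ioo, ENNReal.toReal_ofReal (by linarith),
      smul_eq_mul]
    have : w.re ≠ 0 := hw.ne
    field_simp
    ring
  rw [← h2]
  refine setIntegral_mono_on (integrableOn_const (by simp)) (hint.mono_set hsub) measurableSet_Ioo fun t ht => ?_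
  rw [kernel_re, inv_eq_one_div, div_le_div_iff₀ (by linarith)
    (add_pos_of_pos_of_nonneg (sq_pos_of_neg hw) (sq_nonneg _))]
  have h3 : (t - w.im) ^ 2 ≤ w.re ^ 2 := by
    rw [sq_le_sq, abs_of_neg hw, abs_le]
    constructor <;> linarith [ht.1, ht.2]
  nlinarith

/-- The set of heights `t` at which the branch `L` of `log (z - x)` equals `log R + i t` has length
at most `2π`: it contains at most one representative of each angle. -/
theorem volume_heights_le {Ω : Set ℂ} {x : ℂ} {R : ℝ} (L : ℂ → ℂ) {E : Set ℝ} (hEo : IsOpen E)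
    (hE : ∀ t ∈ E, x + R * Complex.exp (t * Complex.I) ∈ Ω ∧
      L (x + R * Complex.exp (t * Complex.I)) = Real.log R + t * Complex.I) :
    volume E ≤ ENNReal.ofReal (2 * Real.pi) := by
  by_contra! hlt
  have hfd := isAddFundamentalDomain_Ioc Real.two_pi_pos 0 volume
  obtain ⟨p, q, hpq, hd⟩ := exists_pair_mem_lattice_not_disjoint_vadd hfd
    hEo.measurableSet.nullMeasurableSet (by simpa using hlt)
  obtain ⟨y, hy1, hy2⟩ := Set.not_disjoint_iff.1 hd
  obtain ⟨s, hs, rfl⟩ := hy1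
  obtain ⟨t, ht, hst⟩ := hy2
  have hst : (q : ℝ) + t = p + s := hst
  obtain ⟨k, hk⟩ := AddSubgroup.mem_zmultiples_iff.1 p.2
  obtain ⟨l, hl⟩ := AddSubgroup.mem_zmultiples_iff.1 q.2
  rw [zsmul_eq_mul] at hk hl
  have hexp : Complex.exp (t * Complex.I) = Complex.exp (s * Complex.I) := by
    refine Complex.exp_eq_exp_iff_exists_int.2 ⟨k - l, ?_⟩
    have : t = s + ((k : ℝ) - l) * (2 * Real.pi) := by linarith
    rw [this]
    push_cast
    ring
  have h1 := (hE t ht).2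
  rw [hexp, (hE s hs).2, add_right_inj] at h1
  have h2 : s = t := by exact_mod_cast mul_right_cancel₀ Complex.I_ne_zero h1
  refine hpq (Subtype.ext ?_)
  rw [h2] at hst
  linarith

/-- Barriers. For a simply connected domain `Ω` and a disc around a point `x ∉ Ω`, there is a
superharmonic function, equal to `1` outside of the disc and small near `x`, with an explicit bound
that does not depend on `Ω`. A branch of `log (z - x)` maps `Ω ∩ ball x R` into a half-plane, and
the arcs of `Ω` on the bounding circle to a subset of the boundary line of length at most `2π`;
inside the disc, the barrier is the minimum of `1` and the pull-back of `π` times the Poisson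
integral of that subset. -/
theorem exists_barrier {Ω : Set ℂ} (hΩ : IsOpen Ω) (hsc : IsSimplyConnected Ω) {x : ℂ}
    (hx : x ∉ Ω) {R : ℝ} (hR : 0 < R) :
    ∃ s : ℂ → ℝ, SubMV (fun z => -s z) Ω ∧ (∀ z ∈ Ω, 0 ≤ s z) ∧ (∀ z, s z ≤ 1) ∧
      (∀ z, z ∉ ball x R → s z = 1) ∧
      ∀ z ∈ Ω, z ∈ ball x R → s z * Real.log (R / dist z x) ≤ 2 * Real.pi := by
  classical
  obtain ⟨L, hL, hexp⟩ := exists_log_branch hΩ hsc hx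
  have hLc := hL.continuousOn
  have hne : ∀ z ∈ Ω, 0 < dist z x := fun z hz => dist_pos.2 fun h => hx (h ▸ hz)
  have hLre : ∀ z ∈ Ω, (L z).re = Real.log (dist z x) := by
    intro z hz
    rw [dist_eq_norm, ← hexp z hz, Complex.norm_exp, Real.log_exp]
  set pt : ℝ → ℂ := fun t => x + R * Complex.exp (t * Complex.I) with hpt
  have hptc : Continuous pt := by fun_prop
  set E : Set ℝ := {t | pt t ∈ Ω ∧ L (pt t) = Real.log R + t * Complex.I} with hE
  have hRc : (R : ℂ) ≠ 0 := by exact_mod_cast hR.ne'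
  have hexpR : Complex.exp (Real.log R) = R := by
    rw [← Complex.ofReal_exp, Real.exp_log hR]
  have hEo : IsOpen E := by
    rw [isOpen_iff_mem_nhds]
    rintro t ⟨ht, hLt⟩
    have hn : ∀ᶠ t' in 𝓝 t, pt t' ∈ Ω := hptc.continuousAt.eventually (hΩ.mem_nhds ht)
    have hφ : ContinuousAt (fun t' : ℝ => L (pt t') - (Real.log R + t' * Complex.I)) t := by
      refine ContinuousAt.sub ?_ (by fun_prop)
      exact ContinuousAt.comp (hLc.continuousAt (hΩ.mem_nhds ht)) hptc.continuousAt
    have hφ' : ∀ᶠ t' in 𝓝 t, ‖L (pt t') - (Real.log R + t' * Complex.I)‖ < 1 := by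
      have : ‖L (pt t) - (Real.log R + t * Complex.I)‖ < 1 := by rw [hLt, sub_self]; simp
      exact hφ.norm.eventually_lt continuousAt_const this
    filter_upwards [hn, hφ'] with t' h1 h2
    refine ⟨h1, ?_⟩
    obtain ⟨n, hn⟩ : ∃ n : ℤ, L (pt t') = (Real.log R + t' * Complex.I) +
        n * (2 * Real.pi * Complex.I) := by
      refine Complex.exp_eq_exp_iff_exists_int.1 ?_
      rw [hexp _ h1, Complex.exp_add, hexpR, hpt]
      ring
    rw [hn, add_sub_cancel_left] at h2
    have h3 : |(n : ℝ)| * (2 * Real.pi) < 1 := by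
      simpa [abs_of_pos Real.pi_pos] using h2
    have h4 : |(n : ℝ)| < 1 := by nlinarith [Real.pi_gt_three, abs_nonneg (n : ℝ)]
    have h5 : n = 0 := by
      have : |n| < 1 := by exact_mod_cast h4
      exact Int.abs_lt_one_iff.1 this
    rw [hn, h5]; simp
  have hvol : volume E ≤ ENNReal.ofReal (2 * Real.pi) :=
    volume_heights_le L hEo fun t ht => ht
  have hfin : volume E < ⊤ := hvol.trans_lt ENNReal.ofReal_lt_top
  set w : ℂ → ℂ := fun z => L z - Real.log R with hw
  have hwre : ∀ z ∈ Ω, (w z).re = -Real.log (R / dist z x) := by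
    intro z hz
    rw [hw, Complex.sub_re, hLre z hz, Complex.ofReal_re, Real.log_div hR.ne' (hne z hz).ne']
    ring
  have hwneg : ∀ z ∈ Ω ∩ ball x R, (w z).re < 0 := by
    rintro z ⟨hz, hzb⟩
    rw [hwre z hz]
    have := Real.log_pos ((one_lt_div (hne z hz)).2 hzb)
    linarith
  have hwc : ContinuousOn w Ω := hLc.sub continuousOn_const
  set Q : ℂ → ℝ := fun z => (halfPlaneP E (w z)).re with hQ
  have hQd : DifferentiableOn ℂ (fun z => halfPlaneP E (w z)) (Ω ∩ ball x R) :=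
    (halfPlane_differentiable hfin).comp
      ((hL.sub_const _).mono Set.inter_subset_left) hwneg
  have hQm : HasMVP Q (Ω ∩ ball x R) := hasMVP_re hQd
  have hQc : ContinuousOn Q (Ω ∩ ball x R) :=
    Complex.continuous_re.comp_continuousOn hQd.continuousOn
  have hUo : IsOpen (Ω ∩ ball x R) := hΩ.inter isOpen_ball
  set s : ℂ → ℝ := fun z => if z ∈ ball x R then min 1 (Q z) else 1 with hs
  have hsin : ∀ z ∈ ball x R, s z = min 1 (Q z) := fun z hz => if_pos hz
  have hsout : ∀ z, z ∉ ball x R → s z = 1 := fun z hz => if_neg hz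
  have hs1 : ∀ z, s z ≤ 1 := fun z => by
    by_cases h : z ∈ ball x R
    · rw [hsin z h]; exact min_le_left _ _
    · rw [hsout z h]
  -- near points of `Ω` on the bounding circle the Poisson integral is at least `1`
  have hsev : ∀ z ∈ Ω, z ∉ ball x R → ∀ᶠ y in 𝓝 z, s y = 1 := by
    intro z hz hzb
    have hzR : R ≤ dist z x := by simpa using hzb
    rcases hzR.lt_or_eq with h | h
    · filter_upwards [(isOpen_lt continuous_const (continuous_id.dist continuous_const)).mem_nhds
        (show z ∈ {y : ℂ | R < dist (id y) x} from h)] with y hy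
      exact hsout y (by simpa using le_of_lt hy)
    · have hre : (w z).re = 0 := by rw [hwre z hz, ← h, div_self hR.ne', Real.log_one, neg_zero]
      set b := (w z).im with hb
      have hwb : w z = b * Complex.I := by
        apply Complex.ext <;> simp [hre, hb]
      have hLz : L z = Real.log R + b * Complex.I := by rw [← hwb, hw]; ring
      have hptb : pt b = z := by
        have := hexp z hz
        rw [hLz, Complex.exp_add, hexpR] at this
        rw [hpt]; simp only [this]; ring
      have hbE : b ∈ E := ⟨by rw [hptb]; exact hz, by rw [hptb, hLz]⟩
      obtain ⟨δ, hδ, hball⟩ := Metric.isOpen_iff.1 hEo b hbE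
      have hnear : ∀ᶠ y in 𝓝 z, dist (w y) (w z) < δ / 2 :=
        (hwc.continuousAt (hΩ.mem_nhds hz)).eventually (ball_mem_nhds _ (by linarith))
      filter_upwards [hnear, hΩ.mem_nhds hz] with y hy hyΩ
      by_cases hyb : y ∈ ball x R
      · rw [hsin y hyb, min_eq_left]
        refine one_le_halfPlane hfin (hwneg y ⟨hyΩ, hyb⟩) fun t ht => hball ?_
        rw [dist_eq_norm] at hy
        have h1 := (Complex.abs_re_le_norm _).trans_lt hy
        have h2 := (Complex.abs_im_le_norm _).trans_lt hy
        rw [Complex.sub_re, hre, sub_zero, abs_lt] at h1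
        rw [Complex.sub_im, abs_lt] at h2
        rw [mem_ball, Real.dist_eq, abs_lt]
        constructor <;> linarith [ht.1, ht.2, h1.1, h1.2, h2.1, h2.2]
      · exact hsout y hyb
  have hsc' : ContinuousOn s Ω := by
    intro z hz
    refine ContinuousAt.continuousWithinAt ?_
    by_cases hzb : z ∈ ball x R
    · have h1 : ContinuousAt (fun y => min 1 (Q y)) z :=
        continuousAt_const.min (hQc.continuousAt (hUo.mem_nhds ⟨hz, hzb⟩))
      refine h1.congr ?_
      filter_upwards [isOpen_ball.mem_nhds hzb] with y hy
      exact (hsin y hy).symm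
    · exact continuousAt_const.congr ((hsev z hz hzb).mono fun y hy => hy.symm)
  refine ⟨s, ⟨hsc'.neg, fun z hz => ?_⟩, fun z hz => ?_, hs1, hsout, fun z hz hzb => ?_⟩
  -- the value `1` is the largest possible one; elsewhere `s` agrees with the harmonic `Q ≥ s`
  · by_cases h1 : s z = 1
    · filter_upwards [eventually_closedBall (hΩ.mem_nhds hz)] with r hr
      rw [h1, ← avg_const z hr.1 (-1)]
      exact avg_mono hr.1 continuousOn_const (hsc'.neg.mono hr.2) fun y _ => by linarith [hs1 y]
    · have hzb : z ∈ ball x R := by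
        by_contra h; exact h1 (hsout z h)
      have hsz : s z = Q z := by
        rw [hsin z hzb] at h1 ⊢
        rcases min_choice 1 (Q z) with h | h
        · exact absurd h h1
        · exact h
      filter_upwards [eventually_closedBall (hUo.mem_nhds ⟨hz, hzb⟩)] with r hr
      rw [hsz, hQm z ⟨hz, hzb⟩ r hr.1 hr.2, ← avg_neg]
      refine avg_mono hr.1 (hQc.neg.mono hr.2)
        (hsc'.neg.mono (hr.2.trans Set.inter_subset_left)) fun y hy => ?_
      rw [hsin y (hr.2 (ball_subset_closedBall hy)).2]
      linarith [min_le_right 1 (Q y)]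
  · by_cases hzb : z ∈ ball x R
    · rw [hsin z hzb]
      exact le_min zero_le_one (halfPlane_nonneg hfin (hwneg z ⟨hz, hzb⟩))
    · rw [hsout z hzb]; exact zero_le_one
  · have h1 := halfPlane_le hvol (hwneg z ⟨hz, hzb⟩)
    have h2 := hwneg z ⟨hz, hzb⟩
    rw [hwre z hz] at h1 h2
    rw [neg_neg] at h1
    refine le_trans ?_ h1
    rw [hsin z hzb]
    exact mul_le_mul_of_nonneg_right (min_le_right _ _) (by linarith)

/-! ### The Dirichlet problem on a simply connected domain -/

/-- How close to the centre one has to be for the barrier bound to give an error below `ε`. -/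
theorem lt_log_of_lt {R ε d : ℝ} (hR : 0 < R) (hε : 0 < ε) (hd : 0 < d)
    (h : d < R * Real.exp (-(2 * Real.pi / ε))) : 2 * Real.pi < ε * Real.log (R / d) := by
  have h1 : 2 * Real.pi / ε < Real.log (R / d) := by
    rw [Real.lt_log_iff_exp_lt (by positivity), lt_div_iff₀ hd]
    rw [Real.exp_neg, ← div_eq_mul_inv, lt_div_iff₀ (Real.exp_pos _)] at h
    linarith
  rw [div_lt_iff₀ hε] at h1
  linarith

/-- The Dirichlet problem on a simply connected domain, by Perron's method: the superharmonic
family consists of `1` and of the functions `M + s` with `s` the barrier of a disc on which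
`f ≤ M`. The last clause bounds the solution from below near points off the domain, with constants
that do not depend on the domain. -/
theorem dirichlet {Ω : Set ℂ} (hΩ : IsOpen Ω) (hsc : IsSimplyConnected Ω) {f : ℂ → ℝ}
    (hf : Continuous f) (hf0 : ∀ z, 0 ≤ f z) (hf1 : ∀ z, f z ≤ 1) :
    ∃ h : ℂ → ℝ, (∀ z, 0 ≤ h z) ∧ (∀ z, h z ≤ 1) ∧ (∀ z, z ∉ Ω → h z = f z) ∧
      ContinuousOn h (closure Ω) ∧ HasMVP h Ω ∧
      ∀ x, x ∉ Ω → ∀ R, 0 < R → ∀ m, (∀ y ∈ ball x R, m ≤ f y) →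
        ∀ z ∈ Ω, z ∈ ball x R → (m - h z) * Real.log (R / dist z x) ≤ 2 * Real.pi := by
  classical
  choose S hSsub hS0 hS1 hSout hSbd using
    fun (x : ℂ) (hx : x ∉ Ω) (R : ℝ) (hR : 0 < R) => exists_barrier hΩ hsc hx hR
  set 𝓦 : Set (ℂ → ℝ) := {W | W = (fun _ => 1) ∨ ∃ (x : ℂ) (hx : x ∉ Ω) (R : ℝ) (hR : 0 < R)
    (M : ℝ), (∀ y ∈ ball x R, f y ≤ M) ∧ W = fun z => M + S x hx R hR z} with h𝓦def
  have h𝓦 : ∀ W ∈ 𝓦, SubMV (fun z => -W z) Ω ∧ ∀ z ∈ Ω, 0 ≤ W z := by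
    rintro W (rfl | ⟨x, hx, R, hR, M, hM, rfl⟩)
    · exact ⟨subMV_const (-1) Ω, fun _ _ => zero_le_one⟩
    · have hM0 := (hf0 x).trans (hM x (mem_ball_self hR))
      refine ⟨?_, fun z hz => add_nonneg hM0 (hS0 x hx R hR z hz)⟩
      have := (subMV_const (-M) Ω).add hΩ (hSsub x hx R hR)
      simpa only [neg_add] using this
  obtain ⟨u, huc, hum, hu0, huW, hmax⟩ := perron hΩ h𝓦 (Or.inl rfl)
  have hu1 : ∀ z ∈ Ω, u z ≤ 1 := huW _ (Or.inl rfl)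
  -- the competitor `m - S` lies below every member of `𝓦`: two discs that share the point `p` give
  -- `m ≤ f p ≤ M`, and off either disc one of the barriers equals `1`
  have hlow : ∀ x, x ∉ Ω → ∀ R, 0 < R → ∀ m, (∀ y ∈ ball x R, m ≤ f y) →
      ∀ z ∈ Ω, z ∈ ball x R → (m - u z) * Real.log (R / dist z x) ≤ 2 * Real.pi := by
    intro x hx R hR m hm z hz hzb
    have hm1 : m ≤ 1 := (hm x (mem_ball_self hR)).trans (hf1 x)
    have h1 : m + -S x hx R hR z ≤ u z := by
      refine hmax (fun z => m + -S x hx R hR z) ((subMV_const m Ω).add hΩ (hSsub x hx R hR)) ?_ z hz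
      rintro W (rfl | ⟨y, hy, R', hR', M, hM, rfl⟩) p hp
      · have := hS0 x hx R hR p hp
        simp only; linarith
      · have hM0 := (hf0 y).trans (hM y (mem_ball_self hR'))
        have h2 := hS0 x hx R hR p hp
        have h3 := hS0 y hy R' hR' p hp
        by_cases hpx : p ∈ ball x R
        · by_cases hpy : p ∈ ball y R'
          · have := (hm p hpx).trans (hM p hpy)
            simp only; linarith
          · have := hSout y hy R' hR' p hpy
            simp only; linarith
        · have := hSout x hx R hR p hpx
          simp only; linarith
    refine le_trans (mul_le_mul_of_nonneg_right (by linarith) ?_) (hSbd x hx R hR z hz hzb)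
    have hpos : 0 < dist z x := dist_pos.2 fun h => hx (h ▸ hz)
    exact (Real.log_pos ((one_lt_div hpos).2 hzb)).le
  have hupp : ∀ x, x ∉ Ω → ∀ R, 0 < R → ∀ M, (∀ y ∈ ball x R, f y ≤ M) →
      ∀ z ∈ Ω, z ∈ ball x R → (u z - M) * Real.log (R / dist z x) ≤ 2 * Real.pi := by
    intro x hx R hR M hM z hz hzb
    have h1 : u z ≤ M + S x hx R hR z := huW _ (Or.inr ⟨x, hx, R, hR, M, hM, rfl⟩) z hz
    refine le_trans (mul_le_mul_of_nonneg_right (by linarith) ?_) (hSbd x hx R hR z hz hzb)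
    have hpos : 0 < dist z x := dist_pos.2 fun h => hx (h ▸ hz)
    exact (Real.log_pos ((one_lt_div hpos).2 hzb)).le
  set h : ℂ → ℝ := fun z => if z ∈ Ω then u z else f z with hh
  have hin : ∀ z ∈ Ω, h z = u z := fun z hz => if_pos hz
  have hout : ∀ z, z ∉ Ω → h z = f z := fun z hz => if_neg hz
  refine ⟨h, fun z => ?_, fun z => ?_, hout, fun x _ => ContinuousAt.continuousWithinAt ?_,
    fun z hz r hr hs => ?_, fun x hx R hR m hm z hz hzb => ?_⟩
  · by_cases hz : z ∈ Ω
    · rw [hin z hz]; exact hu0 z hz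
    · rw [hout z hz]; exact hf0 z
  · by_cases hz : z ∈ Ω
    · rw [hin z hz]; exact hu1 z hz
    · rw [hout z hz]; exact hf1 z
  · by_cases hx : x ∈ Ω
    · refine (huc.continuousAt (hΩ.mem_nhds hx)).congr ?_
      filter_upwards [hΩ.mem_nhds hx] with y hy
      exact (hin y hy).symm
    · rw [Metric.continuousAt_iff']
      intro ε hε
      obtain ⟨R, hR, hfR⟩ := Metric.continuousAt_iff.1 hf.continuousAt (ε / 2) (half_pos hε)
      have hfR' : ∀ y ∈ ball x R, f x - ε / 2 ≤ f y ∧ f y ≤ f x + ε / 2 := by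
        intro y hy
        have := hfR (mem_ball.1 hy)
        rw [Real.dist_eq, abs_lt] at this
        constructor <;> linarith [this.1, this.2]
      have hδ : 0 < R * Real.exp (-(2 * Real.pi / (ε / 2))) := by positivity
      filter_upwards [ball_mem_nhds x hδ, ball_mem_nhds x hR] with z hz hzb
      rw [hout x hx, Real.dist_eq, abs_lt]
      by_cases hzΩ : z ∈ Ω
      · have hpos : 0 < dist z x := dist_pos.2 fun h => hx (h ▸ hzΩ)
        have h1 := lt_log_of_lt hR (half_pos hε) hpos hz
        have h2 := hlow x hx R hR _ (fun y hy => (hfR' y hy).1) z hzΩ hzb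
        have h3 := hupp x hx R hR _ (fun y hy => (hfR' y hy).2) z hzΩ hzb
        have hlog := (Real.log_pos ((one_lt_div hpos).2 hzb)).le
        have h4 := lt_of_mul_lt_mul_right (h2.trans_lt h1) hlog
        have h5 := lt_of_mul_lt_mul_right (h3.trans_lt h1) hlog
        rw [hin z hzΩ]
        constructor <;> linarith
      · rw [hout z hzΩ]
        have := hfR' z hzb
        constructor <;> linarith [this.1, this.2]
  · rw [hin z hz, hum z hz r hr hs]
    exact avg_congr fun y hy => (hin y (hs (ball_subset_closedBall hy))).symm
  · rw [hin z hz]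
    exact hlow x hx R hR m hm z hz hzb

/-! ### Convergence of domains -/

/-- The value at the base point of the solution of the Dirichlet problem. Only the boundary values
matter, as a harmonic measure does not charge the open set `Ω`. -/
theorem harmonicMeasure_value {Ω : Set ℂ} (hΩ : IsOpen Ω) {w : ℂ} {μ : Measure ℂ}
    (hμ : IsHarmonicMeasure Ω w μ) {f h : ℂ → ℝ} (h0 : ∀ z, 0 ≤ h z) (h1 : ∀ z, h z ≤ 1)
    (hf : ∀ z, z ∉ Ω → h z = f z) (hc : ContinuousOn h (closure Ω)) (hm : HasMVP h Ω) :
    h w = ∫ z, f z ∂μ := by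
  rw [hμ.2.2 h hc ⟨1, fun z => abs_le.2 ⟨by linarith [h0 z], h1 z⟩⟩ hm]
  have hae : ∀ᵐ z ∂μ, z ∈ frontier Ω := hμ.2.1
  refine integral_congr_ae (hae.mono fun z hz => hf z fun hzΩ => ?_)
  rw [hΩ.frontier_eq] at hz
  exact hz.2 hzΩ

theorem WeakConv.tendsto_integral {μ : ℕ → Measure ℂ} {ν : Measure ℂ} (h : WeakConv μ ν)
    {f : ℂ → ℝ} (hf : Continuous f) (hf0 : ∀ z, 0 ≤ f z) (hf1 : ∀ z, f z ≤ 1) :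
    Tendsto (fun n => ∫ z, f z ∂(μ n)) atTop (𝓝 (∫ z, f z ∂ν)) :=
  h (BoundedContinuousFunction.ofNormedAddCommGroup f hf 1 fun z => by
    rw [Real.norm_of_nonneg (hf0 z)]; exact hf1 z)

/-- Near a point where `f > 0`, the solution of the Dirichlet problem with boundary values `f` is
bounded below at every point of the domain that is close to the complement of the domain. The
constants are the same for all domains. -/
theorem dirichlet_lower {f : ℂ → ℝ} (hf : Continuous f) {p : ℂ} (hp : 0 < f p) :
    ∃ ρ > 0, ∃ c > 0, ∀ (Ω : Set ℂ) (h : ℂ → ℝ),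
      (∀ x, x ∉ Ω → ∀ R, 0 < R → ∀ m, (∀ y ∈ ball x R, m ≤ f y) →
        ∀ z ∈ Ω, z ∈ ball x R → (m - h z) * Real.log (R / dist z x) ≤ 2 * Real.pi) →
      ∀ z ∈ Ω, dist z p < ρ → ¬ closedBall z ρ ⊆ Ω → c ≤ h z := by
  set m := f p / 2 with hm
  have hm0 : 0 < m := by positivity
  obtain ⟨R, hR, hfR⟩ := Metric.eventually_nhds_iff.1
    (hf.continuousAt.eventually_const_lt (show m < f p by linarith))
  set δ := R / 2 * Real.exp (-(2 * Real.pi / (m / 2))) with hδ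
  have hδ0 : 0 < δ := by positivity
  have hk1 : min δ (R / 2) ≤ δ := min_le_left _ _
  have hk2 : min δ (R / 2) ≤ R / 2 := min_le_right _ _
  have hk0 : 0 < min δ (R / 2) := by positivity
  refine ⟨min δ (R / 2) / 2, by positivity, m / 2, by positivity, ?_⟩
  intro Ω h hbd z hz hzp hns
  obtain ⟨x, hx, hxΩ⟩ := Set.not_subset.1 hns
  rw [mem_closedBall, dist_comm] at hx
  have hpos : 0 < dist z x := dist_pos.2 fun h => hxΩ (h ▸ hz)
  have hzb : z ∈ ball x (R / 2) := by rw [mem_ball]; linarith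
  have h1 := hbd x hxΩ (R / 2) (by linarith) m (fun y hy => by
    refine (hfR ?_).le
    have h3 := dist_triangle y x p
    have h4 := dist_triangle_left x p z
    have h5 := mem_ball.1 hy
    linarith) z hz hzb
  have h2 : 2 * Real.pi < m / 2 * Real.log (R / 2 / dist z x) :=
    lt_log_of_lt (by linarith) (by linarith) hpos (by linarith)
  have hlog := (Real.log_pos ((one_lt_div hpos).2 hzb)).le
  have := lt_of_mul_lt_mul_right (h1.trans_lt h2) hlog
  linarith

/-- The kernel condition for compact sets. The solutions `u n` with boundary values
`min 1 (dist (·, Ωlᶜ))` tend to `0` at the base points. By `dirichlet_lower` the complement of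
`Ω n` then keeps away from the base point, and Harnack's inequality transports this over `Ωl`. -/
theorem compact_eventually_subset
    {Ω : ℕ → Set ℂ} {w : ℕ → ℂ} {Ωl : Set ℂ} {wl : ℂ}
    (hopen : ∀ n, IsOpen (Ω n)) (hsc : ∀ n, IsSimplyConnected (Ω n)) (hw : ∀ n, w n ∈ Ω n)
    (hopenl : IsOpen Ωl) (hconnl : IsConnected Ωl) (hhypl : Ωlᶜ.Nonempty) (hwl : wl ∈ Ωl)
    {μ : ℕ → Measure ℂ} {ν : Measure ℂ} (hμ : ∀ n, IsHarmonicMeasure (Ω n) (w n) (μ n))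
    (hν : IsHarmonicMeasure Ωl wl ν) (hwconv : Tendsto w atTop (𝓝 wl)) (hweak : WeakConv μ ν)
    {K : Set ℂ} (hK : IsCompact K) (hKl : K ⊆ Ωl) : ∀ᶠ n in atTop, K ⊆ Ω n := by
  set f : ℂ → ℝ := fun z => min 1 (infDist z Ωlᶜ) with hfdef
  have hfc : Continuous f := continuous_const.min (continuous_infDist_pt _)
  have hf0 : ∀ z, 0 ≤ f z := fun z => le_min zero_le_one infDist_nonneg
  have hf1 : ∀ z, f z ≤ 1 := fun z => min_le_left _ _
  have hfpos : ∀ z ∈ Ωl, 0 < f z := fun z hz =>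
    lt_min one_pos ((hopenl.isClosed_compl.notMem_iff_infDist_pos hhypl).1 (by simpa using hz))
  have hlim := hweak.tendsto_integral hfc hf0 hf1
  have hν0 : ∫ z, f z ∂ν = 0 := by
    have hae : ∀ᵐ z ∂ν, z ∈ frontier Ωl := hν.2.1
    refine integral_eq_zero_of_ae (hae.mono fun z hz => ?_)
    rw [hopenl.frontier_eq] at hz
    simp [hfdef, infDist_zero_of_mem (show z ∈ Ωlᶜ from hz.2)]
  rw [hν0] at hlim
  choose u hu0 hu1 huf huc hum hubd using fun n => dirichlet (hopen n) (hsc n) hfc hf0 hf1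
  have huw : Tendsto (fun n => u n (w n)) atTop (𝓝 0) := by
    refine hlim.congr fun n => ?_
    exact (harmonicMeasure_value (hopen n) (hμ n) (hu0 n) (hu1 n) (huf n) (huc n) (hum n)).symm
  -- points near which the domains `Ω n` eventually contain a fixed disc, with `u n → 0` uniformly
  set G : Set ℂ := {z | ∃ r > 0, (∀ᶠ n in atTop, ball z r ⊆ Ω n) ∧
    ∀ ε > 0, ∀ᶠ n in atTop, ∀ y ∈ ball z r, u n y < ε} with hG
  have hGo : IsOpen G := by
    rw [isOpen_iff_mem_nhds]
    rintro z ⟨r, hr, h1, h2⟩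
    filter_upwards [ball_mem_nhds z hr] with y hy
    have hsub : ball y (r - dist y z) ⊆ ball z r := ball_subset_ball' (by linarith)
    exact ⟨r - dist y z, by linarith [mem_ball.1 hy], h1.mono fun n h => hsub.trans h,
      fun ε hε => (h2 ε hε).mono fun n h x hx => h x (hsub hx)⟩
  -- smallness of `u n` at points near `p` keeps `∂Ω n` away from `p`, and then spreads by Harnack
  have key : ∀ p ∈ Ωl, ∃ ρ > 0, ∀ z : ℕ → ℂ, (∀ᶠ n in atTop, z n ∈ Ω n ∧ dist (z n) p < ρ) →
      Tendsto (fun n => u n (z n)) atTop (𝓝 0) → p ∈ G := by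
    intro p hp
    obtain ⟨ρ, hρ, c, hc, hlow⟩ := dirichlet_lower hfc (hfpos p hp)
    refine ⟨ρ / 4, by linarith, fun z hz hz0 => ?_⟩
    have hsub : ∀ᶠ n in atTop, dist (z n) p < ρ / 4 ∧ closedBall (z n) ρ ⊆ Ω n := by
      filter_upwards [hz, hz0.eventually_lt_const hc] with n h1 h2
      refine ⟨h1.2, ?_⟩
      by_contra h3
      have := hlow (Ω n) (u n) (hubd n) (z n) h1.1 (by linarith [h1.2]) h3
      linarith
    have hd : ∀ n, dist (z n) p < ρ / 4 → ∀ y ∈ ball p (ρ / 4), dist y (z n) ≤ ρ / 2 := by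
      intro n h1 y hy
      have h2 := dist_triangle_right y (z n) p
      have h3 := mem_ball.1 hy
      linarith
    refine ⟨ρ / 4, by linarith, ?_, fun ε hε => ?_⟩
    · filter_upwards [hsub] with n hn y hy
      exact hn.2 (mem_closedBall.2 (by linarith [hd n hn.1 y hy]))
    · filter_upwards [hsub, hz0.eventually_lt_const (show 0 < ε / 4 by linarith)] with n hn hn' y hy
      have h1 := harnack ((huc n).mono subset_closure) (hum n) (fun x _ => hu0 n x) hn.2
        (hd n hn.1 y hy) (by linarith)
      have h2 : (1 - ρ / 2 / ρ) = 1 / 2 := by field_simp; norm_num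
      rw [h2] at h1
      linarith
  have hwlG : wl ∈ G := by
    obtain ⟨ρ, hρ, h⟩ := key wl hwl
    refine h w ?_ huw
    filter_upwards [hwconv.eventually (ball_mem_nhds wl hρ)] with n hn
    exact ⟨hw n, hn⟩
  have hall : Ωl ⊆ G := by
    refine hconnl.isPreconnected.subset_of_closure_inter_subset hGo ⟨wl, hwl, hwlG⟩ ?_
    rintro p ⟨hpc, hp⟩
    obtain ⟨ρ, hρ, h⟩ := key p hp
    obtain ⟨q, ⟨r, hr, hq1, hq2⟩, hq⟩ := Metric.mem_closure_iff.1 hpc ρ hρ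
    refine h (fun _ => q) ?_ ?_
    · filter_upwards [hq1] with n hn
      exact ⟨hn (mem_ball_self hr), by rwa [dist_comm]⟩
    · rw [Metric.tendsto_nhds]
      intro ε hε
      filter_upwards [hq2 ε hε] with n hn
      rw [dist_zero_right, Real.norm_of_nonneg (hu0 n q)]
      exact hn q (mem_ball_self hr)
  refine hK.induction_on (p := fun s => ∀ᶠ n in atTop, s ⊆ Ω n) (by simp) ?_ ?_ ?_
  · exact fun s t hst h => h.mono fun n hn => hst.trans hn
  · exact fun s t h1 h2 => (h1.and h2).mono fun n hn => Set.union_subset hn.1 hn.2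
  · intro x hx
    obtain ⟨r, hr, h1, -⟩ := hall (hKl hx)
    exact ⟨ball x r, mem_nhdsWithin_of_mem_nhds (ball_mem_nhds x hr), h1⟩

/-- A nonnegative harmonic function on a domain that vanishes at a point vanishes identically. -/
theorem zero_of_zero {Ω : Set ℂ} (hΩ : IsOpen Ω) (hconn : IsConnected Ω) {h : ℂ → ℝ}
    (hc : ContinuousOn h Ω) (hm : HasMVP h Ω) (h0 : ∀ z ∈ Ω, 0 ≤ h z) {w : ℂ} (hw : w ∈ Ω)
    (hhw : h w = 0) : ∀ z ∈ Ω, h z = 0 := by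
  have key : ∀ q p s, 0 < s → h q = 0 → closedBall q s ⊆ Ω → dist p q ≤ s / 2 → h p = 0 := by
    intro q p s hs hq hsub hd
    have h1 := harnack hc hm h0 hsub hd (by linarith)
    have h2 : (1 - s / 2 / s) = 1 / 2 := by field_simp; norm_num
    rw [h2, hq] at h1
    have := h0 p (hsub (mem_closedBall.2 (by linarith)))
    linarith
  have hsub : Ω ⊆ {z | z ∈ Ω ∧ h z = 0} := by
    refine hconn.isPreconnected.subset_of_closure_inter_subset ?_ ⟨w, hw, hw, hhw⟩ ?_
    · rw [isOpen_iff_mem_nhds]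
      rintro z ⟨hz, hz0⟩
      obtain ⟨s, hs, hs'⟩ := (eventually_closedBall (hΩ.mem_nhds hz)).exists
      filter_upwards [hΩ.mem_nhds hz, closedBall_mem_nhds z (half_pos hs)] with y hy hyb
      exact ⟨hy, key z y s hs hz0 hs' hyb⟩
    · rintro p ⟨hpc, hp⟩
      obtain ⟨s, hs, hs'⟩ := (eventually_closedBall (hΩ.mem_nhds hp)).exists
      obtain ⟨q, ⟨-, hq0⟩, hq⟩ := Metric.mem_closure_iff.1 hpc (s / 4) (by linarith)
      refine ⟨hp, key q p (s / 2) (by linarith) hq0 ?_ (by linarith)⟩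
      refine (closedBall_subset_closedBall' ?_).trans hs'
      rw [dist_comm]; linarith
  exact fun z hz => (hsub hz).2

/-- The kernel condition for connected open sets. If `U` left `Ωl`, it would contain a point of
`∂Ωl`; a bump function at that point with support in `U` has integral `0` against infinitely many
`μ n`, hence against `ν`, so its harmonic extension to `Ωl` vanishes, contrary to its boundary
values. -/
theorem subset_of_frequently_subset
    {Ω : ℕ → Set ℂ} {w : ℕ → ℂ} {Ωl : Set ℂ} {wl : ℂ} (hopen : ∀ n, IsOpen (Ω n))
    (hopenl : IsOpen Ωl) (hconnl : IsConnected Ωl) (hscl : IsSimplyConnected Ωl) (hwl : wl ∈ Ωl)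
    {μ : ℕ → Measure ℂ} {ν : Measure ℂ} (hμ : ∀ n, IsHarmonicMeasure (Ω n) (w n) (μ n))
    (hν : IsHarmonicMeasure Ωl wl ν) (hweak : WeakConv μ ν)
    {U : Set ℂ} (hU : IsOpen U) (hUc : IsConnected U) (hwU : wl ∈ U)
    (hfr : ∃ᶠ n in atTop, U ⊆ Ω n) : U ⊆ Ωl := by
  by_contra hns
  obtain ⟨x, hxU, hxΩ, hxc⟩ : ∃ x ∈ U, x ∉ Ωl ∧ x ∈ closure Ωl := by
    by_contra! hno
    exact hns (hUc.isPreconnected.subset_of_closure_inter_subset hopenl ⟨wl, hwU, hwl⟩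
      fun x hx => by_contra fun h => hno x hx.2 h hx.1)
  obtain ⟨r, hr, hrU⟩ := Metric.isOpen_iff.1 hU x hxU
  set f : ℂ → ℝ := fun z => max 0 (1 - dist z x / r) with hf
  have hfc : Continuous f := by fun_prop
  have hf0 : ∀ z, 0 ≤ f z := fun z => le_max_left _ _
  have hf1 : ∀ z, f z ≤ 1 := fun z =>
    max_le zero_le_one (by have : 0 ≤ dist z x / r := by positivity
                           linarith)
  have hfx : f x = 1 := by simp [hf]
  have hfout : ∀ z, z ∉ U → f z = 0 := by
    intro z hz
    have h1 : r ≤ dist z x := by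
      by_contra! h; exact hz (hrU h)
    refine max_eq_left ?_
    have := (one_le_div hr).2 h1
    linarith
  have hν0 : ∫ z, f z ∂ν = 0 := by
    refine tendsto_nhds_unique_of_frequently_eq (hweak.tendsto_integral hfc hf0 hf1)
      tendsto_const_nhds (hfr.mono fun n hn => ?_)
    have hae : ∀ᵐ z ∂(μ n), z ∈ frontier (Ω n) := (hμ n).2.1
    refine integral_eq_zero_of_ae (hae.mono fun z hz => ?_)
    rw [(hopen n).frontier_eq] at hz
    exact hfout z fun h => hz.2 (hn h)
  obtain ⟨h, h0, h1, hhf, hc, hm, -⟩ := dirichlet hopenl hscl hfc hf0 hf1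
  have hw0 : h wl = 0 := by
    rw [harmonicMeasure_value hopenl hν h0 h1 hhf hc hm, hν0]
  have hz := zero_of_zero hopenl hconnl (hc.mono subset_closure) hm (fun z _ => h0 z) hwl hw0
  have : (𝓝[Ωl] x).NeBot := mem_closure_iff_nhdsWithin_neBot.1 hxc
  have ht : Tendsto h (𝓝[Ωl] x) (𝓝 (h x)) := (hc x hxc).mono subset_closure
  have ht' : Tendsto h (𝓝[Ωl] x) (𝓝 0) :=
    tendsto_const_nhds.congr' (eventually_nhdsWithin_of_forall fun z hz' => (hz z hz').symm)
  have h2 := tendsto_nhds_unique ht ht'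
  rw [hhf x hxΩ, hfx] at h2
  exact one_ne_zero h2

/-- For simply connected hyperbolic domains, weak convergence of harmonic
measures (with `w n → wl`) implies Carathéodory convergence. -/
theorem measureConv_implies_caratheodory
    (Ω : ℕ → Set ℂ) (w : ℕ → ℂ) (Ωl : Set ℂ) (wl : ℂ)
    (hopen : ∀ n, IsOpen (Ω n)) (hconn : ∀ n, IsConnected (Ω n))
    (hsc : ∀ n, SimplyConnectedSpace (Ω n))
    (hhyp : ∀ n, (Ω n)ᶜ.Nonempty) (hw : ∀ n, w n ∈ Ω n)
    (hopenl : IsOpen Ωl) (hconnl : IsConnected Ωl)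
    (hscl : SimplyConnectedSpace Ωl)
    (hhypl : Ωlᶜ.Nonempty) (hwl : wl ∈ Ωl)
    (μ : ℕ → Measure ℂ) (ν : Measure ℂ)
    (hμ : ∀ n, IsHarmonicMeasure (Ω n) (w n) (μ n))
    (hν : IsHarmonicMeasure Ωl wl ν)
    (hwconv : Tendsto w atTop (nhds wl))
    (hweak : WeakConv μ ν) :
    CaratheodoryConv Ω w Ωl wl :=
  ⟨hwconv, fun _ hK hKl => compact_eventually_subset hopen hsc hw hopenl hconnl hhypl hwl hμ hν
    hwconv hweak hK hKl, fun _ hU hUc hwU hfr => subset_of_frequently_subset hopen hopenl hconnl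
    hscl hwl hμ hν hweak hU hUc hwU hfr⟩
end
end

section
/- There exist regular planar domains Ω_n and two disjoint-boundary domains Ω = D and Ω' = (1/2)D such that (Ω_n, 0) and (Ω', 0) have arbitrarily good common interior approximations, yet for every w ∈ Ω the harmonic measures ω_{Ω_n}(w, ·) converge weakly to ω_Ω(w, ·). The domains are Ω_n = D \ K_n, where K_n is a union of 2^n tiny radial segments of half-length r_n centered on the circle |z| = 1/2 + 2^{-n} at equally spaced angles, with r_n small enough that {z : ω_{Ω_n}(z, K_n) > 2^{-n}} ⊆ {1/2 + 2^{-n-1} < |z| < 1/2 + 2^{-n+1}}. -/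
/-!
The domains are `Ω n = {‖z‖ < 1, ‖B z‖ > δ}` with the Blaschke product
`B z = (z ^ m - ρ ^ m) / (1 - ρ ^ m * z ^ m)`, where `m = n + 1` and `ρ = ρ n` decreases to `1 / 2`:
the unit disc minus `m` tiny holes around the equally spaced points of the circle `‖z‖ = ρ` where
`z ^ m = ρ ^ m`. Since `log ‖B‖ / log δ` is harmonic in `Ω n`, is `0` on the unit circle and `1` on the
boundary of the holes, it is the harmonic measure of the holes, explicitly. It is small away from
the circle `‖z‖ = ρ` as soon as `δ` is a sufficiently high power of a lower bound of `‖B‖` there.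

*Interior approximation.* The discs of radius `1 / 2 - η` lie in all `Ω n` (`exists_holes`), and
their boundary points are close to the holes, because the latter get dense in the circle of radius
`1 / 2` (`infDist_frontier_dom_le`).

*Weak convergence.* On the unit circle every continuous function is a uniform limit of real parts
of polynomials `P` (`exists_approx`). The integral of `Re P` is `Re (P w)` for the harmonic measures
at `w` of both `Ω n` and the unit disc, and the holes have little mass (`estimate_dom`).

*Harmonic measures.* They exist on every bounded open set by the M. Riesz extension theorem, the
minimum principle for functions with the mean value property, and the Riesz-Markov-Kakutani theorem
(`exists_representing`). Proving that they are unique would require solving the Dirichlet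
problem; instead, they are chosen with full support. By Harnack's inequality,
`h ↦ h w - c * h w'` is still a positive functional for some `c > 0`, so that a measure at `w` may be
taken to dominate a multiple of a measure at `w'`. Letting `w'` run through a dense sequence, and using
that every boundary point has harmonic functions peaking there (`hasPeaks_dom`, explicit holomorphic
functions built from `B`), one gets full support (`exists_regular_family`).
-/

open MeasureTheory Metric Filter Topology

noncomputable section

open scoped CompactlySupported

/-! ### Functions with the mean value property -/

/-- Functions continuous on `closure U` and harmonic in `U`, in the sense of the mean value property.
Only the global bound required in `IsHarmonicMeasure` is left out: for bounded `U` it can be arranged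
by changing the function off `closure U`. -/
def HarmCont (U : Set ℂ) (h : ℂ → ℝ) : Prop :=
  ContinuousOn h (closure U) ∧ HasMVP h U

theorem HarmCont.integrableOn {U : Set ℂ} {h : ℂ → ℝ} (hh : HarmCont U h) {z : ℂ} {r : ℝ}
    (hz : closedBall z r ⊆ U) : IntegrableOn h (ball z r) :=
  ((hh.1.mono (hz.trans subset_closure)).integrableOn_compact
    (isCompact_closedBall z r)).mono_set ball_subset_closedBall

theorem volume_real_ball_pos (z : ℂ) {r : ℝ} (hr : 0 < r) : 0 < volume.real (ball z r) :=
  ENNReal.toReal_pos (measure_ball_pos _ _ hr).ne' measure_ball_lt_top.ne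

theorem HarmCont.add {U : Set ℂ} {h k : ℂ → ℝ} (hh : HarmCont U h) (hk : HarmCont U k) :
    HarmCont U (fun x => h x + k x) := by
  refine ⟨hh.1.add hk.1, fun z hz r hr hb => ?_⟩
  beta_reduce
  rw [hh.2 z hz r hr hb, hk.2 z hz r hr hb, setAverage_eq, setAverage_eq, setAverage_eq,
    integral_add (hh.integrableOn hb) (hk.integrableOn hb), smul_add]

theorem HarmCont.const_mul {U : Set ℂ} {h : ℂ → ℝ} (c : ℝ) (hh : HarmCont U h) :
    HarmCont U (fun x => c * h x) := by
  refine ⟨hh.1.const_smul c, fun z hz r hr hb => ?_⟩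
  beta_reduce
  rw [hh.2 z hz r hr hb, setAverage_eq, setAverage_eq, integral_const_mul]
  simp only [smul_eq_mul]
  ring

theorem HarmCont.const {U : Set ℂ} (c : ℝ) : HarmCont U (fun _ => c) := by
  refine ⟨continuousOn_const, fun z hz r hr hb => ?_⟩
  rw [setAverage_const (measure_ball_pos _ _ hr).ne' measure_ball_lt_top.ne]

theorem HarmCont.congr {U : Set ℂ} {h k : ℂ → ℝ} (hh : HarmCont U h)
    (hk : Set.EqOn k h (closure U)) : HarmCont U k := by
  refine ⟨hh.1.congr hk, fun z hz r hr hb => ?_⟩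
  rw [hk (subset_closure hz), hh.2 z hz r hr hb]
  refine setAverage_congr_fun measurableSet_ball (ae_of_all _ fun x hx => ?_)
  exact (hk (subset_closure (hb (ball_subset_closedBall hx)))).symm

/-- The averages of a harmonic function over discs are computed in polar coordinates, from its
averages over circles. -/
theorem hasMVP_of_harmonicAt {U : Set ℂ} {h : ℂ → ℝ}
    (hh : ∀ z ∈ U, InnerProductSpace.HarmonicAt h z) : HasMVP h U := by
  intro z hz r hr hb
  have hcont : ContinuousOn h (closedBall z r) := fun x hx =>
    (hh x (hb hx)).1.continuousAt.continuousWithinAt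
  have hcirc : ∀ ρ ∈ Set.Ioo 0 r, ∫ θ in Set.Ioo (-Real.pi) Real.pi, h (circleMap z ρ θ)
      = 2 * Real.pi * h z := by
    intro ρ hρ
    have h1 : Real.circleAverage h z ρ = h z := by
      apply InnerProductSpace.HarmonicOnNhd.circleAverage_eq
      intro x hx
      rw [abs_of_pos hρ.1] at hx
      exact hh x (hb (closedBall_subset_closedBall hρ.2.le hx))
    have h2 : ∫ θ in (0:ℝ)..2 * Real.pi, h (circleMap z ρ θ)
        = ∫ θ in (-Real.pi)..Real.pi, h (circleMap z ρ θ) := by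
      have hp : Function.Periodic (fun θ => h (circleMap z ρ θ)) (2 * Real.pi) := fun θ => by
        simp only [periodic_circleMap z ρ θ]
      have := hp.intervalIntegral_add_eq 0 (-Real.pi)
      rw [zero_add] at this
      rw [this]
      congr 1
      ring
    rw [Real.circleAverage_def, h2, intervalIntegral.integral_of_le (by linarith [Real.pi_pos]),
      integral_Ioc_eq_integral_Ioo] at h1
    rw [← h1, smul_eq_mul]
    field_simp
  have hint : ∫ x in ball z r, h x = Real.pi * r ^ 2 * h z := by
    have e1 : ∫ x in ball z r, h x = ∫ v, (ball (0:ℂ) r).indicator (fun v => h (z + v)) v := by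
      rw [← integral_indicator measurableSet_ball,
        ← integral_add_left_eq_self (μ := volume) ((ball z r).indicator h) z]
      congr 1
      ext v
      simp [Set.indicator]
    rw [e1, ← Complex.integral_comp_polarCoord_symm]
    have e2 : ∀ p ∈ polarCoord.target,
        p.1 • (ball (0:ℂ) r).indicator (fun v => h (z + v)) (Complex.polarCoord.symm p)
        = (Set.Ioo 0 r ×ˢ Set.Ioo (-Real.pi) Real.pi).indicator
          (fun p => p.1 * h (circleMap z p.1 p.2)) p := by
      rintro ⟨ρ, θ⟩ hp
      obtain ⟨hp1, hp2⟩ : ρ ∈ Set.Ioi (0:ℝ) ∧ θ ∈ Set.Ioo (-Real.pi) Real.pi := hp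
      simp only [Set.mem_Ioi] at hp1
      have e3 : z + Complex.polarCoord.symm (ρ, θ) = circleMap z ρ θ := by
        rw [Complex.polarCoord_symm_apply, circleMap, Complex.exp_mul_I]
        simp
      have e4 : Complex.polarCoord.symm (ρ, θ) ∈ ball (0:ℂ) r ↔ ρ < r := by
        rw [mem_ball_zero_iff, Complex.norm_polarCoord_symm, abs_of_pos hp1]
      by_cases hρ : ρ < r
      · rw [Set.indicator_of_mem (e4.2 hρ), Set.indicator_of_mem (show ((ρ, θ) : ℝ × ℝ) ∈
            Set.Ioo 0 r ×ˢ Set.Ioo (-Real.pi) Real.pi from ⟨⟨hp1, hρ⟩, hp2⟩), e3,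
          smul_eq_mul]
      · rw [Set.indicator_of_notMem (fun h' => hρ (e4.1 h')),
          Set.indicator_of_notMem (fun h' => hρ h'.1.2), smul_zero]
    rw [setIntegral_congr_fun polarCoord.open_target.measurableSet e2, setIntegral_indicator
      (measurableSet_Ioo.prod measurableSet_Ioo)]
    have e5 : polarCoord.target ∩ Set.Ioo 0 r ×ˢ Set.Ioo (-Real.pi) Real.pi
        = Set.Ioo 0 r ×ˢ Set.Ioo (-Real.pi) Real.pi := by
      apply Set.inter_eq_self_of_subset_right
      exact Set.prod_mono (fun x hx => hx.1) le_rfl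
    have e6 : IntegrableOn (fun p : ℝ × ℝ => p.1 * h (circleMap z p.1 p.2))
        (Set.Ioo 0 r ×ˢ Set.Ioo (-Real.pi) Real.pi) (volume.prod volume) := by
      have : ContinuousOn (fun p : ℝ × ℝ => p.1 * h (circleMap z p.1 p.2))
          (Set.Icc 0 r ×ˢ Set.Icc (-Real.pi) Real.pi) := by
        refine continuousOn_fst.mul (hcont.comp (by unfold circleMap; fun_prop) ?_)
        rintro ⟨ρ, θ⟩ hp
        have h1 := hp.1.1
        have h2 := hp.1.2
        simp only at h1 h2
        exact closedBall_subset_closedBall h2 (circleMap_mem_closedBall z h1 θ)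
      exact (this.integrableOn_compact (isCompact_Icc.prod isCompact_Icc)).mono_set
        (Set.prod_mono Set.Ioo_subset_Icc_self Set.Ioo_subset_Icc_self)
    rw [e5, Measure.volume_eq_prod, setIntegral_prod _ e6]
    have e7 : ∀ ρ ∈ Set.Ioo 0 r, ∫ θ in Set.Ioo (-Real.pi) Real.pi, ρ * h (circleMap z ρ θ)
        = ρ * (2 * Real.pi * h z) := fun ρ hρ => by
      rw [integral_const_mul, hcirc ρ hρ]
    rw [setIntegral_congr_fun measurableSet_Ioo e7, integral_mul_const,
      ← integral_Ioc_eq_integral_Ioo, ← intervalIntegral.integral_of_le hr.le, integral_id]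
    ring
  rw [setAverage_eq, hint, measureReal_def, Complex.volume_ball]
  simp [hr.le]
  field_simp

theorem HarmCont.of_re {U : Set ℂ} (hU : IsOpen U) {f : ℂ → ℂ} (hc : ContinuousOn f (closure U))
    (hf : DifferentiableOn ℂ f U) : HarmCont U (fun z => (f z).re) :=
  ⟨Complex.continuous_re.comp_continuousOn hc, hasMVP_of_harmonicAt fun _ hz =>
    (hf.analyticAt (hU.mem_nhds hz)).harmonicAt_re⟩

/-- Minimum principle: at the rightmost point where a negative minimum is attained, the mean value
property produces further minimum points still more to the right. -/
theorem HarmCont.nonneg {U : Set ℂ} (hU : IsOpen U) (hb : Bornology.IsBounded U) {h : ℂ → ℝ}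
    (hh : HarmCont U h) (h0 : ∀ x ∈ frontier U, 0 ≤ h x) : ∀ x ∈ closure U, 0 ≤ h x := by
  by_contra! hcon
  obtain ⟨y, hy, hneg⟩ := hcon
  have hK : IsCompact (closure U) := hb.isCompact_closure
  obtain ⟨m, hm, hmin⟩ := hK.exists_isMinOn ⟨y, hy⟩ hh.1
  have hm0 : h m < 0 := (hmin hy).trans_lt hneg
  have hS : IsCompact (closure U ∩ h ⁻¹' {h m}) := by
    apply hK.of_isClosed_subset _ Set.inter_subset_left
    exact hh.1.preimage_isClosed_of_isClosed isClosed_closure isClosed_singleton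
  obtain ⟨q, hq, hmax⟩ := hS.exists_isMaxOn ⟨m, hm, rfl⟩ Complex.continuous_re.continuousOn
  have hqm : h q = h m := hq.2
  have hqU : q ∈ U := by
    by_contra hqU
    have : q ∈ frontier U := by
      rw [hU.frontier_eq]
      exact ⟨hq.1, hqU⟩
    linarith [h0 q this]
  obtain ⟨r, hr, hball⟩ := nhds_basis_closedBall.mem_iff.1 (hU.mem_nhds hqU)
  have hsub : ball q r ⊆ closure U := ball_subset_closedBall.trans (hball.trans subset_closure)
  have hint := hh.integrableOn hball
  have hconst : IntegrableOn (fun _ => h m) (ball q r) :=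
    integrableOn_const measure_ball_lt_top.ne
  have hzero : ∫ x in ball q r, (h - fun _ => h m : ℂ → ℝ) x = 0 := by
    simp only [Pi.sub_apply]
    rw [integral_sub hint hconst]
    have h1 := hh.2 q hqU r hr hball
    have h2 : (volume.real (ball q r)) ≠ 0 :=
      (volume_real_ball_pos _ hr).ne'
    rw [setAverage_eq, hqm] at h1
    rw [integral_const, measureReal_restrict_apply_univ, h1, smul_smul, mul_inv_cancel₀ h2,
      one_smul, sub_self]
  rw [setIntegral_eq_zero_iff_of_nonneg_ae _ (hint.sub hconst)] at hzero
  · have heq := Measure.eqOn_open_of_ae_eq hzero isOpen_ball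
      ((hh.1.mono hsub).sub continuousOn_const) continuousOn_const
    have hp : q + ((r / 2 : ℝ) : ℂ) ∈ ball q r := by
      rw [mem_ball, dist_eq_norm, add_sub_cancel_left, Complex.norm_real, Real.norm_eq_abs,
        abs_of_pos (by positivity)]
      linarith
    have h3 := heq hp
    simp only [Pi.zero_apply, Pi.sub_apply] at h3
    have h4 := hmax ⟨hsub hp, (sub_eq_zero.1 h3 : h _ = h m)⟩
    simp at h4
    linarith
  · filter_upwards [ae_restrict_mem measurableSet_ball] with x hx
    exact sub_nonneg.2 (hmin (hsub hx))

/-- Harnack's inequality: for neighbouring points it follows by comparing averages over nested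
discs, and connectedness chains neighbours together. -/
theorem harnack_s9 {U : Set ℂ} (hU : IsOpen U) (hc : IsPreconnected U) {w w' : ℂ} (hw : w ∈ U)
    (hw' : w' ∈ U) : ∃ c : ℝ, 0 < c ∧ ∀ h : ℂ → ℝ, HarmCont U h → (∀ x ∈ U, 0 ≤ h x) →
      c * h w' ≤ h w := by
  refine hc.induction₂' (fun w w' => ∃ c : ℝ, 0 < c ∧ ∀ h : ℂ → ℝ, HarmCont U h →
    (∀ x ∈ U, 0 ≤ h x) → c * h w' ≤ h w) ?_ ?_ hw hw'
  · intro x hx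
    obtain ⟨r, hr, hball⟩ := nhds_basis_closedBall.mem_iff.1 (hU.mem_nhds hx)
    have key : ∀ a b : ℂ, closedBall a (r / 2) ⊆ U → closedBall b (r / 4) ⊆ ball a (r / 2) →
        ∃ c : ℝ, 0 < c ∧ ∀ h : ℂ → ℝ, HarmCont U h →
          (∀ x ∈ U, 0 ≤ h x) → c * h b ≤ h a := by
      intro a b ha hb
      refine ⟨volume.real (ball b (r / 4)) / volume.real (ball a (r / 2)), ?_, ?_⟩
      · exact div_pos (volume_real_ball_pos _ (by positivity))
          (volume_real_ball_pos _ (by positivity))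
      · intro h hh hpos
        have haU : a ∈ U := ha (mem_closedBall_self (by positivity))
        have hbU : closedBall b (r / 4) ⊆ U := hb.trans (ball_subset_closedBall.trans ha)
        have h1 := hh.2 a haU _ (by positivity) ha
        have h2 := hh.2 b (hbU (mem_closedBall_self (by positivity))) _ (by positivity) hbU
        have h3 : ∫ y in ball b (r / 4), h y ≤ ∫ y in ball a (r / 2), h y := by
          apply setIntegral_mono_set (hh.integrableOn ha)
          · filter_upwards [ae_restrict_mem measurableSet_ball] with y hy
            exact hpos y (ha (ball_subset_closedBall hy))
          · exact (ball_subset_closedBall.trans hb).eventuallyLE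
        have p1 : 0 < volume.real (ball b (r / 4)) := volume_real_ball_pos _ (by positivity)
        have p2 : 0 < volume.real (ball a (r / 2)) := volume_real_ball_pos _ (by positivity)
        rw [h1, h2, setAverage_eq, setAverage_eq, smul_eq_mul, smul_eq_mul]
        calc _ = (volume.real (ball a (r / 2)))⁻¹ * ∫ y in ball b (r / 4), h y := by
              field_simp
          _ ≤ _ := by gcongr
    filter_upwards [mem_nhdsWithin_of_mem_nhds (ball_mem_nhds x (show 0 < r / 4 by positivity))]
      with y hy
    have hd : dist y x < r / 4 := hy
    constructor
    · apply key x y ((closedBall_subset_closedBall (by linarith)).trans hball)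
      apply closedBall_subset_ball'
      linarith
    · apply key y x ((closedBall_subset_closedBall' (by linarith)).trans hball)
      apply closedBall_subset_ball'
      rw [dist_comm]
      linarith
  · rintro x y z - - - ⟨c, hc, h1⟩ ⟨d, hd, h2⟩
    refine ⟨c * d, by positivity, fun h hh hp => ?_⟩
    calc c * d * h z = c * (d * h z) := by ring
      _ ≤ c * h y := by gcongr; exact h2 h hh hp
      _ ≤ h x := h1 h hh hp

/-! ### Existence of harmonic measures -/

/-- The functional `h ↦ h w - c * h w'`, if positive on the harmonic functions which are nonnegative
on the boundary, is represented by a measure on the boundary. The M. Riesz extension theorem extends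
it to all continuous functions on `closure U`, keeping positivity on the cone of the functions
nonnegative on `frontier U`. The representing measure ignores the interior, because the extension
vanishes at the distance to the boundary. -/
theorem exists_representing {U : Set ℂ} (hb : Bornology.IsBounded U) {w w' : ℂ} (hw : w ∈ U)
    (hw' : w' ∈ U) (c : ℝ)
    (H : ∀ h : ℂ → ℝ, HarmCont U h → (∀ x ∈ frontier U, 0 ≤ h x) → c * h w' ≤ h w) :
    ∃ μ : Measure ℂ, IsFiniteMeasure μ ∧ μ (frontier U)ᶜ = 0 ∧
      ∀ h : ℂ → ℝ, HarmCont U h → ∫ x, h x ∂μ = h w - c * h w' := by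
  have hK : IsCompact (closure U) := hb.isCompact_closure
  have hcs : CompactSpace (closure U) := isCompact_iff_compactSpace.1 hK
  let pw : closure U := ⟨w, subset_closure hw⟩
  let pw' : closure U := ⟨w', subset_closure hw'⟩
  let A : Submodule ℝ C(closure U, ℝ) :=
    { carrier := {f | ∃ h : ℂ → ℝ, HarmCont U h ∧ ∀ x : closure U, h x = f x}
      add_mem' := by
        rintro f g ⟨h, hh, hf⟩ ⟨k, hk, hg⟩
        exact ⟨_, hh.add hk, fun x => by simp [hf, hg]⟩
      zero_mem' := ⟨_, HarmCont.const 0, fun x => by simp⟩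
      smul_mem' := by
        rintro a f ⟨h, hh, hf⟩
        exact ⟨_, hh.const_mul a, fun x => by simp [hf]⟩ }
  let φ : C(closure U, ℝ) →ₗ[ℝ] ℝ :=
    { toFun := fun f => f pw - c * f pw'
      map_add' := fun f g => by simp; ring
      map_smul' := fun a f => by simp; ring }
  let s : PointedCone ℝ C(closure U, ℝ) :=
    { carrier := {f | ∀ x : closure U, (x : ℂ) ∈ frontier U → 0 ≤ f x}
      add_mem' := fun {f g} hf hg x hx => add_nonneg (hf x hx) (hg x hx)
      zero_mem' := fun x _ => le_rfl
      smul_mem' := fun a f hf x hx => mul_nonneg a.2 (hf x hx) }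
  obtain ⟨g, hg1, hg2⟩ := riesz_extension s ⟨A, φ.domRestrict A⟩ (by
    rintro ⟨f, h, hh, hf⟩ hfs
    have := H h hh fun x hx => by
      rw [hf ⟨x, frontier_subset_closure hx⟩]
      exact hfs ⟨x, frontier_subset_closure hx⟩ hx
    change 0 ≤ f pw - c * f pw'
    rw [← hf pw, ← hf pw']
    exact sub_nonneg.2 this) (by
    intro y
    refine ⟨⟨ContinuousMap.const _ ‖y‖, _, HarmCont.const ‖y‖, fun x => rfl⟩, fun x _ => ?_⟩
    have h1 := (abs_le.1 ((Real.norm_eq_abs _).symm.le.trans (y.norm_coe_le_norm x))).1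
    change 0 ≤ ‖y‖ + y x
    linarith)
  let toC : C_c(closure U, ℝ) →ₗ[ℝ] C(closure U, ℝ) :=
    { toFun := fun f => f.toContinuousMap
      map_add' := fun f g => rfl
      map_smul' := fun a f => rfl }
  let Λ : C_c(closure U, ℝ) →ₚ[ℝ] ℝ := PositiveLinearMap.mk₀ (g ∘ₗ toC)
    (fun f hf => hg2 _ fun x _ => hf x)
  let m : Measure (closure U) := RealRMK.rieszMeasure Λ
  have hm : ∀ f : C(closure U, ℝ), ∫ x, f x ∂m = g f := fun f =>
    RealRMK.integral_rieszMeasure Λ ⟨f, HasCompactSupport.of_compactSpace f⟩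
  have hfin : IsFiniteMeasure m := inferInstanceAs (IsFiniteMeasure (RealRMK.rieszMeasure Λ))
  have hemb : MeasurableEmbedding (Subtype.val : closure U → ℂ) :=
    MeasurableEmbedding.subtype_coe isClosed_closure.measurableSet
  have hfr : (frontier U).Nonempty := by
    rw [nonempty_frontier_iff]
    refine ⟨⟨w, hw⟩, ?_⟩
    rintro rfl
    exact NormedSpace.unbounded_univ ℝ ℂ hb
  refine ⟨m.map Subtype.val, inferInstance, ?_, ?_⟩
  · rw [hemb.map_apply]
    let d : C(closure U, ℝ) := ⟨fun x => infDist (x : ℂ) (frontier U), by fun_prop⟩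
    have hd0 : ∀ x : closure U, (x : ℂ) ∈ frontier U → d x = 0 := fun x hx =>
      infDist_zero_of_mem hx
    have h1 : g d = 0 := by
      apply le_antisymm
      · have := hg2 (-d) fun x hx => by simp [hd0 x hx]
        rw [map_neg] at this
        linarith
      · exact hg2 d fun x hx => (hd0 x hx).ge
    rw [← hm d, integral_eq_zero_iff_of_nonneg (f := d) (fun x => infDist_nonneg)
      (BoundedContinuousFunction.integrable m (BoundedContinuousFunction.mkOfCompact d))] at h1
    rw [Set.preimage_compl, ← MeasureTheory.mem_ae_iff]
    filter_upwards [h1] with x hx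
    exact (isClosed_frontier.mem_iff_infDist_zero hfr).2 hx
  · intro h hh
    rw [hemb.integral_map]
    let f : C(closure U, ℝ) := ⟨fun x => h x, hh.1.domRestrict⟩
    rw [show ∫ x : closure U, h x ∂m = g f from hm f]
    exact hg1 ⟨f, h, hh, fun x => rfl⟩

/-- A probability measure on `frontier U` which reproduces at `w` all functions of the class
`HarmCont U`. -/
def Reproduces (U : Set ℂ) (w : ℂ) (μ : Measure ℂ) : Prop :=
  IsProbabilityMeasure μ ∧ μ (frontier U)ᶜ = 0 ∧
    ∀ h : ℂ → ℝ, HarmCont U h → h w = ∫ x, h x ∂μ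

theorem Reproduces.isHarmonicMeasure {U : Set ℂ} {w : ℂ} {μ : Measure ℂ}
    (h : Reproduces U w μ) : IsHarmonicMeasure U w μ :=
  ⟨h.1, h.2.1, fun k hk _ hm => h.2.2 k ⟨hk, hm⟩⟩

theorem integrable_of_frontier {U : Set ℂ} (hb : Bornology.IsBounded U) {μ : Measure ℂ}
    [IsFiniteMeasure μ] (h0 : μ (frontier U)ᶜ = 0) {h : ℂ → ℝ}
    (hh : ContinuousOn h (closure U)) : Integrable h μ := by
  have hK : IsCompact (frontier U) :=
    hb.isCompact_closure.of_isClosed_subset isClosed_frontier frontier_subset_closure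
  have := (hh.mono frontier_subset_closure).integrableOn_compact (μ := μ) hK
  rwa [IntegrableOn, Measure.restrict_eq_self_of_ae_mem (s := frontier U) (mem_ae_iff.2 h0)] at this

theorem isProbabilityMeasure_of_integral_one {μ : Measure ℂ} [IsFiniteMeasure μ]
    (h : ∫ _, (1 : ℝ) ∂μ = 1) : IsProbabilityMeasure μ := by
  rw [integral_const, smul_eq_mul, mul_one] at h
  refine ⟨?_⟩
  rwa [measureReal_def, ENNReal.toReal_eq_one_iff] at h

theorem exists_reproduces {U : Set ℂ} (hU : IsOpen U) (hb : Bornology.IsBounded U) {w : ℂ}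
    (hw : w ∈ U) : ∃ μ, Reproduces U w μ := by
  obtain ⟨μ, h1, h2, h3⟩ := exists_representing hb hw hw 0 (fun h hh h0 => by
    simpa using hh.nonneg hU hb h0 w (subset_closure hw))
  refine ⟨μ, isProbabilityMeasure_of_integral_one ?_, h2, fun h hh => ?_⟩
  · rw [h3 _ (HarmCont.const 1)]
    simp
  · rw [h3 h hh]
    simp

/-- Every boundary point has arbitrarily small neighbourhoods outside of which some harmonic
function stays, on the boundary, strictly below its value at the point. -/
def HasPeaks (U : Set ℂ) : Prop :=
  ∀ x ∈ frontier U, ∀ r : ℝ, 0 < r → ∃ h : ℂ → ℝ, HarmCont U h ∧ ∃ c, c < h x ∧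
    ∀ y ∈ frontier U, y ∉ ball x r → h y ≤ c

/-- By Harnack's inequality the functional `h ↦ h w - c * h w'` is positive for some `c > 0`, so
that a reproducing measure at `w` can be chosen to dominate a multiple of one at `w'`. -/
theorem exists_reproduces_dominating {U : Set ℂ} (hU : IsOpen U) (hb : Bornology.IsBounded U)
    (hc : IsPreconnected U) {w w' : ℂ} (hw : w ∈ U) (hw' : w' ∈ U) :
    ∃ μ ρ : Measure ℂ, Reproduces U w μ ∧ Reproduces U w' ρ ∧ ρ ≪ μ := by
  obtain ⟨c, hc0, hcH⟩ := harnack_s9 hU hc hw hw'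
  obtain ⟨ρ, hρ⟩ := exists_reproduces hU hb hw'
  obtain ⟨τ, h1, h2, h3⟩ := exists_representing hb hw hw' c (fun h hh h0 =>
    hcH h hh fun x hx => hh.nonneg hU hb h0 x (subset_closure hx))
  have := hρ.1
  have hfin : IsFiniteMeasure (ENNReal.ofReal c • ρ) :=
    Measure.smul_finite ρ ENNReal.ofReal_ne_top
  have hint : ∀ h : ℂ → ℝ, HarmCont U h → h w = ∫ x, h x ∂(ENNReal.ofReal c • ρ + τ) := by
    intro h hh
    have i1 := integrable_of_frontier hb hρ.2.1 hh.1
    rw [integral_add_measure (i1.smul_measure ENNReal.ofReal_ne_top)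
      (integrable_of_frontier hb h2 hh.1), integral_smul_measure, ← hρ.2.2 h hh, h3 h hh,
      ENNReal.toReal_ofReal hc0.le, smul_eq_mul]
    ring
  refine ⟨ENNReal.ofReal c • ρ + τ, ρ, ⟨?_, ?_, hint⟩, hρ, ?_⟩
  · exact isProbabilityMeasure_of_integral_one (hint _ (HarmCont.const 1)).symm
  · simp [hρ.2.1, h2]
  · refine Measure.AbsolutelyContinuous.trans (μ₂ := ENNReal.ofReal c • ρ) ?_ ?_
    · exact Measure.absolutelyContinuous_smul (by simpa using hc0)
    · exact Measure.absolutelyContinuous_of_le (Measure.le_add_right le_rfl)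

/-- Peaking functions make the reproducing measures at points near a boundary point `x` charge the
neighbourhood of `x`. For a given `w`, a mixture of reproducing measures at `w` which dominate
reproducing measures at the points of a dense sequence therefore charges every boundary ball. -/
theorem exists_regular_family {U : Set ℂ} (hU : IsOpen U) (hb : Bornology.IsBounded U)
    (hc : IsConnected U) (hp : HasPeaks U) : ∃ μ : ℂ → Measure ℂ,
      (∀ w ∈ U, Reproduces U w (μ w)) ∧ IsRegularDomain U μ := by
  have hne : Nonempty U := hc.nonempty.to_subtype
  let u : ℕ → U := TopologicalSpace.denseSeq U
  have hu : DenseRange u := TopologicalSpace.denseRange_denseSeq U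
  have key : ∀ w : ℂ, ∃ μ : Measure ℂ, w ∈ U → Reproduces U w μ ∧
      ∀ k, ∃ ρ : Measure ℂ, Reproduces U (u k) ρ ∧ ρ ≪ μ := by
    intro w
    by_cases hw : w ∈ U
    swap
    · exact ⟨0, fun h => absurd h hw⟩
    choose μ ρ hμ hρ hac using fun k => exists_reproduces_dominating hU hb hc.isPreconnected hw
      (u k).2
    have hprob := fun k => (hμ k).1
    let a : ℕ → ENNReal := fun k => 2⁻¹ ^ (k + 1)
    have ha : ∑' k, a k = 1 := by
      simp only [a]
      rw [ENNReal.tsum_geometric_add_one, ENNReal.one_sub_inv_two, inv_inv]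
      exact ENNReal.inv_mul_cancel (by simp) (by simp)
    have ha0 : ∀ k, a k ≠ 0 := fun k => by simp [a]
    let M : Measure ℂ := Measure.sum fun k => a k • μ k
    have hM : IsProbabilityMeasure M := by
      refine ⟨?_⟩
      simp [M, Measure.sum_apply, ha]
    have hM0 : M (frontier U)ᶜ = 0 := by
      rw [Measure.sum_apply _ isClosed_frontier.measurableSet.compl]
      simp [(hμ _).2.1]
    refine ⟨M, fun _ => ⟨⟨hM, hM0, fun h hh => ?_⟩, fun k => ⟨ρ k, hρ k, ?_⟩⟩⟩
    · rw [integral_sum_measure (integrable_of_frontier hb hM0 hh.1)]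
      simp_rw [integral_smul_measure, ← (hμ _).2.2 h hh, smul_eq_mul]
      rw [tsum_mul_right, ← ENNReal.tsum_toReal_eq, ha]
      · simp
      · exact fun k => ENNReal.pow_ne_top (by simp)
    · exact (hac k).trans ((Measure.absolutelyContinuous_smul (ha0 k)).trans
        (Measure.absolutelyContinuous_of_le (Measure.le_sum (fun k => a k • μ k) k)))
  choose μ hμ using key
  refine ⟨μ, fun w hw => (hμ w hw).1, fun w hw x hx r hr => ?_⟩
  obtain ⟨h, hh, c, hcx, hle⟩ := hp x hx r hr
  have hxc : x ∈ closure U := frontier_subset_closure hx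
  obtain ⟨V, hV, hVx, hVc⟩ := mem_nhdsWithin.1 ((hh.1 x hxc).eventually (lt_mem_nhds hcx))
  obtain ⟨y, hyV, hyU⟩ := mem_closure_iff.1 hxc V hV hVx
  obtain ⟨k, hk⟩ := hu.exists_mem_open (hV.preimage continuous_subtype_val) ⟨⟨y, hyU⟩, hyV⟩
  have hck : c < h (u k) := hVc ⟨hk, subset_closure (u k).2⟩
  obtain ⟨ρ, hρ, hac⟩ := (hμ w hw).2 k
  rw [pos_iff_ne_zero]
  intro h0
  have h1 : ρ (ball x r) = 0 := hac h0
  have := hρ.1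
  have h2 : h (u k) ≤ c := by
    rw [hρ.2.2 h hh]
    calc ∫ y, h y ∂ρ ≤ ∫ _, c ∂ρ := by
          apply integral_mono_ae (integrable_of_frontier hb hρ.2.1 hh.1) (integrable_const c)
          filter_upwards [mem_ae_iff.2 hρ.2.1, measure_eq_zero_iff_ae_notMem.1 h1] with y hy hy'
          exact hle y hy hy'
      _ = c := by simp
  linarith

/-! ### The disc minus a sublevel set of a Blaschke product -/

/-- The Möbius automorphism of the unit disc with its zero at the real point `a`. -/
def mob (a : ℝ) (u : ℂ) : ℂ := (u - a) / (1 - a * u)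

/-- The unit disc minus the set where the Blaschke product `z ↦ mob a (z ^ m)` is at most `δ` in
absolute value. For small `δ` that set consists of `m` small holes around the `m`-th roots
of `a`. -/
def Dom (m : ℕ) (a δ : ℝ) : Set ℂ := {z | ‖z‖ < 1 ∧ δ < ‖mob a (z ^ m)‖}

theorem mob_den_ne {a : ℝ} (ha : |a| < 1) {u : ℂ} (hu : ‖u‖ ≤ 1) : (1 : ℂ) - a * u ≠ 0 := by
  intro h
  have h1 : (1 : ℂ) = a * u := sub_eq_zero.1 h
  have h2 : ‖(a : ℂ) * u‖ = 1 := by rw [← h1, norm_one]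
  rw [norm_mul, Complex.norm_real, Real.norm_eq_abs] at h2
  nlinarith [abs_nonneg a, norm_nonneg u]

theorem mob_sq (a : ℝ) (u : ℂ) :
    ‖1 - a * u‖ ^ 2 - ‖u - a‖ ^ 2 = (1 - a ^ 2) * (1 - ‖u‖ ^ 2) := by
  simp only [← Complex.normSq_eq_norm_sq, Complex.normSq_apply]
  simp
  ring

theorem norm_mob_lt {a : ℝ} (ha : |a| < 1) {u : ℂ} (hu : ‖u‖ < 1) : ‖mob a u‖ < 1 := by
  have h := norm_pos_iff.2 (mob_den_ne ha hu.le)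
  rw [mob, norm_div, div_lt_one h]
  have h1 := mob_sq a u
  have h2 : 0 < (1 - a ^ 2) * (1 - ‖u‖ ^ 2) := by
    apply mul_pos
    · rw [sub_pos, sq_lt_one_iff_abs_lt_one]; exact ha
    · nlinarith [norm_nonneg u]
  exact lt_of_pow_lt_pow_left₀ 2 h.le (by linarith)

theorem norm_mob_eq {a : ℝ} (ha : |a| < 1) {u : ℂ} (hu : ‖u‖ = 1) : ‖mob a u‖ = 1 := by
  have h := norm_pos_iff.2 (mob_den_ne ha hu.le)
  rw [mob, norm_div, div_eq_one_iff_eq h.ne']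
  have h1 := mob_sq a u
  rw [hu] at h1
  exact (pow_left_inj₀ (norm_nonneg _) h.le two_ne_zero).1 (by linarith)

theorem norm_mob_le {a : ℝ} (ha : |a| < 1) {u : ℂ} (hu : ‖u‖ ≤ 1) : ‖mob a u‖ ≤ 1 :=
  hu.lt_or_eq.elim (fun h => (norm_mob_lt ha h).le) (fun h => (norm_mob_eq ha h).le)

theorem le_norm_mob {a : ℝ} (ha0 : 0 ≤ a) (ha : a < 1) {u : ℂ} (hu : ‖u‖ ≤ 1) :
    ‖u - a‖ / 2 ≤ ‖mob a u‖ := by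
  have h := norm_pos_iff.2 (mob_den_ne (abs_lt.2 ⟨by linarith, ha⟩) hu)
  rw [mob, norm_div]
  apply div_le_div_of_nonneg_left (norm_nonneg _) h
  calc ‖1 - a * u‖ ≤ ‖(1 : ℂ)‖ + ‖(a : ℂ) * u‖ := norm_sub_le _ _
    _ = 1 + a * ‖u‖ := by
      rw [norm_one, norm_mul, Complex.norm_real, Real.norm_eq_abs, abs_of_nonneg ha0]
    _ ≤ 2 := by nlinarith [norm_nonneg u]

theorem mob_mob {a : ℝ} (ha : |a| < 1) {u : ℂ} (hu : ‖u‖ ≤ 1) : mob (-a) (mob a u) = u := by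
  have h1 := mob_den_ne ha hu
  have h2 : (1 : ℂ) - (a : ℂ) ^ 2 ≠ 0 := by
    have : a ^ 2 < 1 := by rw [sq_lt_one_iff_abs_lt_one]; exact ha
    exact_mod_cast (sub_pos.2 this).ne'
  have e1 : (u - a) / (1 - a * u) - ((-a : ℝ) : ℂ) = u * (1 - (a : ℂ) ^ 2) / (1 - a * u) := by
    rw [eq_div_iff h1, sub_mul, div_mul_cancel₀ _ h1]
    push_cast
    ring
  have e2 : 1 - ((-a : ℝ) : ℂ) * ((u - a) / (1 - a * u)) = (1 - (a : ℂ) ^ 2) / (1 - a * u) := by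
    rw [eq_div_iff h1, sub_mul, mul_assoc, div_mul_cancel₀ _ h1]
    push_cast
    ring
  unfold mob
  rw [e1, e2, div_div_div_cancel_right₀ h1, mul_div_cancel_right₀ _ h2]

theorem differentiableAt_mob {a : ℝ} (ha : |a| < 1) {u : ℂ} (hu : ‖u‖ ≤ 1) :
    DifferentiableAt ℂ (mob a) u := by
  unfold mob
  exact DifferentiableAt.div (by fun_prop) (by fun_prop) (mob_den_ne ha hu)

theorem differentiableAt_blaschke {a : ℝ} (ha : |a| < 1) (m : ℕ) {z : ℂ} (hz : ‖z‖ ≤ 1) :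
    DifferentiableAt ℂ (fun z => mob a (z ^ m)) z := by
  have h : ‖z ^ m‖ ≤ 1 := by
    rw [norm_pow]
    exact pow_le_one₀ (norm_nonneg z) hz
  exact DifferentiableAt.fun_comp' (f := fun z : ℂ => z ^ m) z (differentiableAt_mob ha h)
    (differentiableAt_pow m)

theorem continuousOn_blaschke {a : ℝ} (ha : |a| < 1) (m : ℕ) :
    ContinuousOn (fun z : ℂ => mob a (z ^ m)) {z | ‖z‖ ≤ 1} := fun _ hz =>
  (differentiableAt_blaschke ha m hz).continuousAt.continuousWithinAt

theorem isOpen_dom {a : ℝ} (ha : |a| < 1) (m : ℕ) (δ : ℝ) : IsOpen (Dom m a δ) := by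
  have h1 : IsOpen {z : ℂ | ‖z‖ < 1} := isOpen_lt continuous_norm continuous_const
  have h2 := ((continuousOn_blaschke ha m).mono (t := {z : ℂ | ‖z‖ < 1}) fun z hz =>
    (show ‖z‖ < 1 from hz).le).norm.isOpen_inter_preimage h1 (isOpen_Ioi (a := δ))
  exact h2

theorem dom_subset_ball (m : ℕ) (a δ : ℝ) : Dom m a δ ⊆ ball 0 1 := fun _ hz =>
  mem_ball_zero_iff.2 hz.1

theorem isBounded_dom (m : ℕ) (a δ : ℝ) : Bornology.IsBounded (Dom m a δ) :=
  isBounded_ball.subset (dom_subset_ball m a δ)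

theorem closure_dom_subset {a : ℝ} (ha : |a| < 1) (m : ℕ) (δ : ℝ) :
    closure (Dom m a δ) ⊆ {z | ‖z‖ ≤ 1 ∧ δ ≤ ‖mob a (z ^ m)‖} := by
  apply closure_minimal
  · exact fun z hz => ⟨hz.1.le, hz.2.le⟩
  · have h1 : IsClosed {z : ℂ | ‖z‖ ≤ 1} := isClosed_le continuous_norm continuous_const
    exact (continuousOn_blaschke ha m).norm.preimage_isClosed_of_isClosed h1
      (isClosed_Ici (a := δ))

theorem frontier_dom_subset {a : ℝ} (ha : |a| < 1) (m : ℕ) (δ : ℝ) {z : ℂ}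
    (hz : z ∈ frontier (Dom m a δ)) :
    ‖z‖ ≤ 1 ∧ δ ≤ ‖mob a (z ^ m)‖ ∧ (‖z‖ = 1 ∨ ‖mob a (z ^ m)‖ = δ) := by
  rw [(isOpen_dom ha m δ).frontier_eq] at hz
  obtain ⟨h1, h2⟩ := closure_dom_subset ha m δ hz.1
  refine ⟨h1, h2, ?_⟩
  by_contra! hcon
  exact hz.2 ⟨lt_of_le_of_ne h1 hcon.1, lt_of_le_of_ne h2 hcon.2.symm⟩

theorem isPreconnected_annulus {δ : ℝ} (hδ : 0 ≤ δ) :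
    IsPreconnected {v : ℂ | δ < ‖v‖ ∧ ‖v‖ < 1} := by
  have h : {v : ℂ | δ < ‖v‖ ∧ ‖v‖ < 1}
      = (fun p : ℝ × ℝ => circleMap 0 p.1 p.2) '' (Set.Ioo δ 1 ×ˢ Set.univ) := by
    ext v
    constructor
    · intro hv
      refine ⟨(‖v‖, v.arg), ⟨⟨hv.1, hv.2⟩, trivial⟩, ?_⟩
      simp [circleMap, Complex.norm_mul_exp_arg_mul_I]
    · rintro ⟨⟨ρ, θ⟩, ⟨hρ, -⟩, rfl⟩
      obtain ⟨h1, h2⟩ : δ < ρ ∧ ρ < 1 := hρ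
      simpa [abs_of_nonneg (hδ.trans h1.le)] using ⟨h1, h2⟩
  rw [h]
  apply (isPreconnected_Ioo.prod isPreconnected_univ).image
  unfold circleMap
  fun_prop

/-- The Möbius image of an annulus. -/
theorem isPreconnected_dom_one {a : ℝ} (ha : |a| < 1) {δ : ℝ} (hδ : 0 ≤ δ) :
    IsPreconnected {u : ℂ | ‖u‖ < 1 ∧ δ < ‖mob a u‖} := by
  have ha' : |-a| < 1 := by rwa [abs_neg]
  have h : {u : ℂ | ‖u‖ < 1 ∧ δ < ‖mob a u‖} = mob (-a) '' {v : ℂ | δ < ‖v‖ ∧ ‖v‖ < 1} := by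
    ext u
    constructor
    · intro hu
      exact ⟨mob a u, ⟨hu.2, norm_mob_lt ha hu.1⟩, mob_mob ha hu.1.le⟩
    · rintro ⟨v, hv, rfl⟩
      refine ⟨norm_mob_lt ha' hv.2, ?_⟩
      have := mob_mob ha' hv.2.le
      rw [neg_neg] at this
      rw [this]
      exact hv.1
  rw [h]
  exact (isPreconnected_annulus hδ).image _ fun v hv =>
    (differentiableAt_mob ha' hv.2.le).continuousAt.continuousWithinAt

theorem isOpenMap_pow {m : ℕ} (hm : m ≠ 0) : IsOpenMap (fun z : ℂ => z ^ m) := by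
  have h : AnalyticOnNhd ℂ (fun z : ℂ => z ^ m) Set.univ := fun z _ => by fun_prop
  rcases h.is_constant_or_isOpen isPreconnected_univ with ⟨w, hw⟩ | h'
  · have h0 := hw 0 trivial
    have h1 := hw 1 trivial
    simp [hm] at h0 h1
    rw [← h0] at h1
    exact absurd h1 one_ne_zero
  · exact fun s hs => h' s (Set.subset_univ s) hs

/-- A relatively clopen part of `Dom m a δ` is mapped by `z ↦ z ^ m`, which is both open and closed,
onto a relatively clopen part of the connected set `Dom 1 a δ`, hence onto all of it. So two
complementary nonempty parts would both contain `0`, the only root of `0`. -/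
theorem isConnected_dom {m : ℕ} (hm : m ≠ 0) {a δ : ℝ} (ha : |a| < 1) (hδ : 0 ≤ δ)
    (hδa : δ < |a|) : IsConnected (Dom m a δ) := by
  let W : Set ℂ := {u : ℂ | ‖u‖ < 1 ∧ δ < ‖mob a u‖}
  have hpre : ∀ z : ℂ, z ^ m ∈ W ↔ z ∈ Dom m a δ := fun z => by
    simp only [W, Dom, Set.mem_ofPred_eq, norm_pow, pow_lt_one_iff_of_nonneg (norm_nonneg z) hm]
  have h0W : (0 : ℂ) ∈ W := by
    simp [W, mob, hδa]
  have h0 : (0 : ℂ) ∈ Dom m a δ := by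
    rw [← hpre, zero_pow hm]
    exact h0W
  refine ⟨⟨0, h0⟩, isPreconnected_iff_subset_of_disjoint.2 fun V₁ V₂ hV₁ hV₂ hsub hdisj => ?_⟩
  have key : ∀ V V' : Set ℂ, IsOpen V → IsOpen V' → Dom m a δ ⊆ V ∪ V' →
      Dom m a δ ∩ (V ∩ V') = ∅ → (Dom m a δ ∩ V).Nonempty → (0 : ℂ) ∈ V := by
    intro V V' hV hV' hsub hdisj hne
    have hO : IsOpen ((fun z : ℂ => z ^ m) '' (Dom m a δ ∩ V)) :=
      isOpenMap_pow hm _ ((isOpen_dom ha m δ).inter hV)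
    have hC : IsClosed ((fun z : ℂ => z ^ m) '' V'ᶜ) := isClosedMap_pow ℂ m _ hV'.isClosed_compl
    have hW := isPreconnected_iff_subset_of_disjoint.1 (isPreconnected_dom_one ha hδ) _ _ hO
      hC.isOpen_compl (by
        intro u hu
        by_cases h : u ∈ (fun z : ℂ => z ^ m) '' V'ᶜ
        · obtain ⟨z, hz, rfl⟩ := h
          have hzD := (hpre z).1 hu
          exact Or.inl ⟨z, ⟨hzD, (hsub hzD).resolve_right hz⟩, rfl⟩
        · exact Or.inr h) (by
        rw [Set.eq_empty_iff_forall_notMem]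
        rintro u ⟨-, ⟨z, hz, rfl⟩, hu⟩
        refine hu ⟨z, fun hz' => ?_, rfl⟩
        exact (Set.eq_empty_iff_forall_notMem.1 hdisj) z ⟨hz.1, hz.2, hz'⟩)
    rcases hW with hW | hW
    · obtain ⟨z, hz, hz0⟩ := hW h0W
      rw [← (pow_eq_zero_iff hm).1 hz0]
      exact hz.2
    · obtain ⟨z, hz⟩ := hne
      refine absurd ⟨z, fun hz' => ?_, rfl⟩ (hW ((hpre z).2 hz.1))
      exact (Set.eq_empty_iff_forall_notMem.1 hdisj) z ⟨hz.1, hz.2, hz'⟩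
  by_contra! hcon
  obtain ⟨z₁, hz₁, hz₁'⟩ := Set.not_subset.1 hcon.1
  obtain ⟨z₂, hz₂, hz₂'⟩ := Set.not_subset.1 hcon.2
  have k1 := key V₁ V₂ hV₁ hV₂ hsub hdisj ⟨z₂, hz₂, (hsub hz₂).resolve_right hz₂'⟩
  have k2 := key V₂ V₁ hV₂ hV₁ (by rwa [Set.union_comm]) (by rwa [Set.inter_comm V₂])
    ⟨z₁, hz₁, (hsub hz₁).resolve_left hz₁'⟩
  exact (Set.eq_empty_iff_forall_notMem.1 hdisj) 0 ⟨h0, k1, k2⟩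

theorem blaschke_ne_zero {a δ : ℝ} (hδ : 0 < δ) {m : ℕ} {z : ℂ} (hz : δ ≤ ‖mob a (z ^ m)‖) :
    mob a (z ^ m) ≠ 0 := norm_pos_iff.1 (hδ.trans_le hz)

theorem norm_half_lt_one {F : ℂ} (h1 : ‖F‖ ≤ 1) (h2 : F ≠ 1) : ‖(1 + F) / 2‖ < 1 := by
  rw [norm_div, Complex.norm_ofNat, div_lt_one two_pos]
  by_contra! hcon
  have e1 : ‖1 + F‖ ^ 2 = 1 + 2 * F.re + ‖F‖ ^ 2 := by
    simp only [← Complex.normSq_eq_norm_sq, Complex.normSq_apply]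
    simp
    ring
  have e2 : ‖F‖ ^ 2 = F.re ^ 2 + F.im ^ 2 := by
    rw [← Complex.normSq_eq_norm_sq, Complex.normSq_apply]
    ring
  have h3 : F.re ≤ 1 := (Complex.re_le_norm F).trans h1
  have h4 : ‖F‖ ^ 2 ≤ 1 := by nlinarith [norm_nonneg F]
  have h5 : (2:ℝ) ^ 2 ≤ ‖1 + F‖ ^ 2 := by gcongr
  have h6 : F.re = 1 := by linarith
  have h7 : F.im = 0 := by
    have : F.im ^ 2 = 0 := le_antisymm (by rw [h6] at e2; linarith) (sq_nonneg _)
    exact pow_eq_zero_iff two_ne_zero |>.1 this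
  exact h2 (Complex.ext h6 h7)

/-- At a point `x` of the unit circle, `z ↦ Re (z * conj x)` peaks. At another boundary point `x`,
with `B` the Blaschke product, `(1 + B x / B z) / 2` has absolute value at most `1`, with equality
only at the `m` points of the fibre of `x`. Its large powers multiplied with a polynomial equal to
`1` at `x` and to `0` at the other points of the fibre peak at `x` only. -/
theorem hasPeaks_dom {m : ℕ} (hm : m ≠ 0) {a δ : ℝ} (ha : |a| < 1) (hδ : 0 < δ) (hδa : δ < |a|) :
    HasPeaks (Dom m a δ) := by
  intro x hx r hr
  have hU := isOpen_dom ha m δ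
  obtain ⟨hx1, hx2, hx3⟩ := frontier_dom_subset ha m δ hx
  rcases hx3 with hx3 | hx3
  · refine ⟨fun z => (z * (starRingEnd ℂ) x).re, HarmCont.of_re hU (by fun_prop) (by fun_prop),
      1 - r ^ 2 / 2, ?_, ?_⟩
    · beta_reduce
      rw [Complex.mul_conj, Complex.normSq_eq_norm_sq, hx3]
      norm_num
      positivity
    · intro y hy hyr
      have hy1 := (frontier_dom_subset ha m δ hy).1
      have h1 : r ≤ ‖y - x‖ := by
        rw [← dist_eq_norm]
        exact not_lt.1 hyr
      have e1 : ‖y - x‖ ^ 2 = ‖y‖ ^ 2 + ‖x‖ ^ 2 - 2 * (y * (starRingEnd ℂ) x).re := by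
        simp only [← Complex.normSq_eq_norm_sq]
        rw [Complex.normSq_sub]
      have h2 : r ^ 2 ≤ ‖y - x‖ ^ 2 := by gcongr
      have h3 : ‖y‖ ^ 2 ≤ 1 := by nlinarith [norm_nonneg y]
      rw [hx3] at e1
      linarith
  · let B : ℂ → ℂ := fun z => mob a (z ^ m)
    let F : ℂ → ℂ := fun z => B x / B z
    let Q : ℂ → ℂ := fun z => (m : ℂ)⁻¹ * ∑ k ∈ Finset.range m, (z / x) ^ k
    have hx0 : x ≠ 0 := by
      rintro rfl
      rw [zero_pow hm] at hx3
      simp [mob] at hx3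
      linarith
    have hm0 : (m : ℂ) ≠ 0 := by exact_mod_cast hm
    have hQx : Q x = 1 := by simp [Q, hx0, hm0]
    have hBx : B x ≠ 0 := blaschke_ne_zero hδ hx2
    have hFx : F x = 1 := div_self hBx
    have hBc : ContinuousOn B (closure (Dom m a δ)) :=
      (continuousOn_blaschke ha m).mono fun z hz => (closure_dom_subset ha m δ hz).1
    have hB0 : ∀ z ∈ closure (Dom m a δ), B z ≠ 0 := fun z hz =>
      blaschke_ne_zero hδ (closure_dom_subset ha m δ hz).2
    have hFc : ContinuousOn F (closure (Dom m a δ)) := continuousOn_const.div hBc hB0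
    have hFd : DifferentiableOn ℂ F (Dom m a δ) := by
      apply (differentiableOn_const (B x)).div
      · exact fun z hz => (differentiableAt_blaschke ha m hz.1.le).differentiableWithinAt
      · exact fun z hz => hB0 z (subset_closure hz)
    have hQd : Differentiable ℂ Q := by
      simp only [Q]
      fun_prop
    have hF1 : ∀ y ∈ closure (Dom m a δ), ‖F y‖ ≤ 1 := by
      intro y hy
      simp only [F]
      rw [norm_div, div_le_one (norm_pos_iff.2 (hB0 y hy))]
      exact hx3.le.trans (closure_dom_subset ha m δ hy).2
    have hQ0 : ∀ y ∈ closure (Dom m a δ), F y = 1 → y ≠ x → Q y = 0 := by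
      intro y hy hFy hyx
      have hpow : ∀ z : ℂ, ‖z‖ ≤ 1 → ‖z ^ m‖ ≤ 1 := fun z hz => by
        rw [norm_pow]
        exact pow_le_one₀ (norm_nonneg z) hz
      have h1 : B y = B x := ((div_eq_one_iff_eq (hB0 y hy)).1 hFy).symm
      have h2 : y ^ m = x ^ m := by
        rw [← mob_mob ha (hpow y (closure_dom_subset ha m δ hy).1), ← mob_mob ha (hpow x hx1)]
        exact congrArg _ h1
      have h3 : (∑ k ∈ Finset.range m, (y / x) ^ k) * (y / x - 1) = 0 := by
        rw [geom_sum_mul, div_pow, h2, div_self (pow_ne_zero m hx0), sub_self]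
      rcases mul_eq_zero.1 h3 with h4 | h4
      · simp only [Q, h4, mul_zero]
      · exact absurd ((div_eq_one_iff_eq hx0).1 (sub_eq_zero.1 h4)) hyx
    -- The part of the boundary where the factor `Q` is not small is handled by a large power.
    let E : Set ℂ := {y ∈ frontier (Dom m a δ) \ ball x r | 1 / 2 ≤ ‖Q y‖}
    have hE : IsCompact E := by
      have : IsCompact (frontier (Dom m a δ)) :=
        (isBounded_dom m a δ).isCompact_closure.of_isClosed_subset isClosed_frontier
          frontier_subset_closure
      apply (this.diff isOpen_ball).inter_right
      exact isClosed_le continuous_const hQd.continuous.norm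
    have hEc : E ⊆ closure (Dom m a δ) := fun y hy => frontier_subset_closure hy.1.1
    obtain ⟨N, hN⟩ : ∃ N : ℕ, ∀ y ∈ E, ‖((1 + F y) / 2) ^ N * Q y‖ ≤ 1 / 2 := by
      rcases E.eq_empty_or_nonempty with hemp | hne
      · exact ⟨0, fun y hy => by simp [hemp] at hy⟩
      obtain ⟨p, hp, hpmax⟩ := hE.exists_isMaxOn hne
        (f := fun y => ‖(1 + F y) / 2‖) (((continuousOn_const.add (hFc.mono hEc)).div_const 2).norm)
      obtain ⟨q, hq, hqmax⟩ := hE.exists_isMaxOn hne (f := fun y => ‖Q y‖)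
        hQd.continuous.norm.continuousOn
      have hlt : ‖(1 + F p) / 2‖ < 1 := by
        apply norm_half_lt_one (hF1 p (hEc hp))
        intro h
        have hpx : p ≠ x := by
          rintro rfl
          exact hp.1.2 (mem_ball_self hr)
        have h' : (1:ℝ) / 2 ≤ ‖Q p‖ := hp.2
        rw [hQ0 p (hEc hp) h hpx, norm_zero] at h'
        norm_num at h'
      have hlim : Tendsto (fun N : ℕ => ‖(1 + F p) / 2‖ ^ N * ‖Q q‖) atTop (𝓝 0) := by
        simpa using (tendsto_pow_atTop_nhds_zero_of_lt_one (norm_nonneg _) hlt).mul_const ‖Q q‖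
      obtain ⟨N, hN⟩ := (hlim.eventually (ge_mem_nhds (show (0:ℝ) < 1 / 2 by norm_num))).exists
      refine ⟨N, fun y hy => ?_⟩
      rw [norm_mul, norm_pow]
      refine le_trans ?_ hN
      gcongr
      · exact hpmax hy
      · exact hqmax hy
    refine ⟨fun z => (((1 + F z) / 2) ^ N * Q z).re, HarmCont.of_re hU ?_ ?_, 1 / 2, ?_, ?_⟩
    · exact (((continuousOn_const.add hFc).div_const 2).pow N).mul hQd.continuous.continuousOn
    · exact ((((differentiableOn_const 1).add hFd).div_const 2).pow N).mul hQd.differentiableOn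
    · norm_num [hFx, hQx]
    · intro y hy hyr
      refine (Complex.re_le_norm _).trans ?_
      by_cases hyQ : 1 / 2 ≤ ‖Q y‖
      · exact hN y ⟨⟨hy, hyr⟩, hyQ⟩
      · have h1 : ‖(1 + F y) / 2‖ ≤ 1 := by
          rw [norm_div, Complex.norm_ofNat, div_le_one two_pos]
          calc ‖1 + F y‖ ≤ ‖(1:ℂ)‖ + ‖F y‖ := norm_add_le _ _
            _ ≤ 2 := by rw [norm_one]; linarith [hF1 y (frontier_subset_closure hy)]
        rw [norm_mul, norm_pow]
        calc ‖(1 + F y) / 2‖ ^ N * ‖Q y‖ ≤ 1 * ‖Q y‖ := by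
              gcongr
              exact pow_le_one₀ (norm_nonneg _) h1
          _ ≤ 1 / 2 := by rw [one_mul]; exact (not_le.1 hyQ).le

/-! ### Weak convergence -/

/-- Trigonometric polynomials are boundary values of real parts of polynomials. -/
theorem exists_approx (f : ℂ → ℝ) (hf : Continuous f) {ε : ℝ} (hε : 0 < ε) :
    ∃ P : ℂ → ℂ, Differentiable ℂ P ∧ ∀ z : ℂ, ‖z‖ = 1 → |f z - (P z).re| ≤ ε := by
  have hT : Fact (0 < 2 * Real.pi) := ⟨Real.two_pi_pos⟩
  let g : C(AddCircle (2 * Real.pi), ℂ) :=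
    ⟨fun t => (f (AddCircle.toCircle t : ℂ) : ℂ), by fun_prop⟩
  have hg : g ∈ (Submodule.span ℂ (Set.range (@fourier (2 * Real.pi)))).topologicalClosure := by
    rw [span_fourier_closure_eq_top]
    trivial
  obtain ⟨q, hq, hqg⟩ := Metric.mem_closure_iff.1 hg ε hε
  have key : ∀ c : ℂ, ∃ P : ℂ → ℂ, Differentiable ℂ P ∧
      ∀ t, (P (AddCircle.toCircle t : ℂ)).re = (c * q t).re := by
    refine Submodule.span_induction (p := fun q _ => ∀ c : ℂ, ∃ P : ℂ → ℂ, Differentiable ℂ P ∧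
      ∀ t, (P (AddCircle.toCircle t : ℂ)).re = (c * q t).re) ?_ ?_ ?_ ?_ hq
    · rintro _ ⟨n, rfl⟩ c
      obtain ⟨k, rfl | rfl⟩ := n.eq_nat_or_neg
      · exact ⟨fun z => c * z ^ k, by fun_prop, fun t => by simp [fourier_apply,
          AddCircle.toCircle_nsmul]⟩
      · -- On the circle, `c * z ^ (-k)` is the conjugate of `conj c * z ^ k`.
        refine ⟨fun z => (starRingEnd ℂ) c * z ^ k, by fun_prop, fun t => ?_⟩
        rw [fourier_neg, ← Complex.conj_re]
        simp [fourier_apply, AddCircle.toCircle_nsmul]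
    · exact fun c => ⟨0, by fun_prop, fun t => by simp⟩
    · intro p q _ _ hp hq c
      obtain ⟨P, hP, hP'⟩ := hp c
      obtain ⟨R, hR, hR'⟩ := hq c
      exact ⟨P + R, hP.add hR, fun t => by simp [hP', hR', mul_add]⟩
    · intro b q _ hq c
      obtain ⟨P, hP, hP'⟩ := hq (c * b)
      exact ⟨P, hP, fun t => by rw [hP', mul_assoc]; rfl⟩
  obtain ⟨P, hP, hPq⟩ := key 1
  refine ⟨P, hP, fun z hz => ?_⟩
  let t : AddCircle (2 * Real.pi) := (z.arg : ℝ)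
  have ht : (AddCircle.toCircle t : ℂ) = z := by
    rw [AddCircle.toCircle_apply_mk, Circle.coe_exp]
    have := Complex.norm_mul_exp_arg_mul_I z
    rw [hz, Complex.ofReal_one, one_mul] at this
    rw [← this]
    congr 2
    have h2 : 2 * Real.pi / (2 * Real.pi) = 1 := div_self Real.two_pi_pos.ne'
    rw [h2, one_mul, this]
  have h1 := (ContinuousMap.dist_lt_iff hε).1 hqg t
  have h2 := hPq t
  rw [one_mul, ht] at h2
  rw [h2]
  have h3 : f z - (q t).re = (g t - q t).re := by
    rw [Complex.sub_re]
    simp [g, ht]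
  rw [h3]
  exact (Complex.abs_re_le_norm _).trans (by rw [← dist_eq_norm]; exact h1.le)

theorem harmCont_log {m : ℕ} {a δ : ℝ} (ha : |a| < 1) (hδ : 0 < δ) :
    HarmCont (Dom m a δ) (fun z => Real.log ‖mob a (z ^ m)‖) := by
  have h0 : ∀ z ∈ closure (Dom m a δ), mob a (z ^ m) ≠ 0 := fun z hz =>
    blaschke_ne_zero hδ (closure_dom_subset ha m δ hz).2
  refine ⟨?_, hasMVP_of_harmonicAt fun z hz => ?_⟩
  · apply ContinuousOn.log
    · exact ((continuousOn_blaschke ha m).mono fun z hz => (closure_dom_subset ha m δ hz).1).norm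
    · exact fun z hz => norm_ne_zero_iff.2 (h0 z hz)
  · refine AnalyticAt.harmonicAt_log_norm (f := fun z => mob a (z ^ m)) ?_
      (h0 z (subset_closure hz))
    have h1 : DifferentiableOn ℂ (fun z => mob a (z ^ m)) (ball 0 1) := fun y hy =>
      (differentiableAt_blaschke ha m (mem_ball_zero_iff.1 hy).le).differentiableWithinAt
    exact h1.analyticAt (isOpen_ball.mem_nhds (mem_ball_zero_iff.2 hz.1))

/-- The function `log ‖B z‖ / log δ`, where `B` is the Blaschke product, vanishes on the unit circle
and is `1` on the rest of the boundary, so that its value at `w` is the mass which the harmonic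
measure at `w` gives to the inner boundary. -/
theorem estimate_dom {m : ℕ} {a δ : ℝ} (ha : |a| < 1) (hδ : 0 < δ) (hδ1 : δ < 1) {w : ℂ}
    {μ : Measure ℂ} (hμ : Reproduces (Dom m a δ) w μ) {f : ℂ → ℝ}
    (hf : Continuous f) {P : ℂ → ℂ} (hP : Differentiable ℂ P) {ε C : ℝ} (hε : 0 ≤ ε)
    (h1 : ∀ z : ℂ, ‖z‖ = 1 → |f z - (P z).re| ≤ ε)
    (h2 : ∀ z : ℂ, ‖z‖ ≤ 1 → |f z - (P z).re| ≤ C) :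
    |∫ z, f z ∂μ - (P w).re| ≤ ε + C * (Real.log ‖mob a (w ^ m)‖ / Real.log δ) := by
  have := hμ.1
  have hb := isBounded_dom m a δ
  have hPh : HarmCont (Dom m a δ) (fun z => (P z).re) :=
    HarmCont.of_re (isOpen_dom ha m δ) hP.continuous.continuousOn hP.differentiableOn
  have hl := harmCont_log (m := m) ha hδ
  have hC : 0 ≤ C := (abs_nonneg _).trans (h2 0 (by simp))
  have hlog : Real.log δ < 0 := Real.log_neg hδ hδ1
  have i1 := integrable_of_frontier hb hμ.2.1 hf.continuousOn
  have i2 := integrable_of_frontier hb hμ.2.1 hPh.1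
  have i3 := integrable_of_frontier hb hμ.2.1 hl.1
  have i4 : Integrable (fun z => ε + C / Real.log δ * Real.log ‖mob a (z ^ m)‖) μ :=
    (integrable_const ε).add (i3.const_mul _)
  have e1 : ∫ z, (ε + C / Real.log δ * Real.log ‖mob a (z ^ m)‖) ∂μ
      = ε + C * (Real.log ‖mob a (w ^ m)‖ / Real.log δ) := by
    rw [integral_add (integrable_const ε) (i3.const_mul _), integral_const_mul, integral_const,
      ← hμ.2.2 _ hl]
    simp
    ring
  rw [hμ.2.2 _ hPh, ← integral_sub i1 i2, ← e1]
  refine (abs_integral_le_integral_abs).trans (integral_mono_ae (i1.sub i2).abs i4 ?_)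
  have hae : ∀ᵐ z ∂μ, z ∈ frontier (Dom m a δ) := mem_ae_iff.2 hμ.2.1
  filter_upwards [hae] with z hz
  obtain ⟨hz1, -, hz3⟩ := frontier_dom_subset ha m δ hz
  rcases hz3 with hz3 | hz3
  · rw [norm_mob_eq ha (by rw [norm_pow, hz3, one_pow]), Real.log_one, mul_zero, add_zero]
    exact h1 z hz3
  · rw [hz3, div_mul_cancel₀ _ hlog.ne]
    exact (h2 z hz1).trans (le_add_of_nonneg_left hε)

/-- The harmonic measure of the unit disc is only tested on boundary values of polynomials. -/
theorem estimate_disc {w : ℂ} {μ : Measure ℂ} (hμ : Reproduces (ball 0 1) w μ) {f : ℂ → ℝ}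
    (hf : Continuous f) {P : ℂ → ℂ} (hP : Differentiable ℂ P) {ε : ℝ}
    (h1 : ∀ z : ℂ, ‖z‖ = 1 → |f z - (P z).re| ≤ ε) :
    |∫ z, f z ∂μ - (P w).re| ≤ ε := by
  have := hμ.1
  have hPh : HarmCont (ball 0 1) (fun z => (P z).re) :=
    HarmCont.of_re isOpen_ball hP.continuous.continuousOn hP.differentiableOn
  have i1 := integrable_of_frontier isBounded_ball hμ.2.1 hf.continuousOn
  have i2 := integrable_of_frontier isBounded_ball hμ.2.1 hPh.1
  rw [hμ.2.2 _ hPh, ← integral_sub i1 i2]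
  have e1 : ∫ _, ε ∂μ = ε := by simp
  rw [← e1]
  refine (abs_integral_le_integral_abs).trans
    (integral_mono_ae (i1.sub i2).abs (integrable_const ε) ?_)
  have hae : ∀ᵐ z ∂μ, z ∈ frontier (ball (0 : ℂ) 1) := mem_ae_iff.2 hμ.2.1
  filter_upwards [hae] with z hz
  rw [frontier_ball _ one_ne_zero, mem_sphere_zero_iff_norm] at hz
  exact h1 z hz

/-! ### Choice of the holes -/

/-- Given radii `1 / 2 < ρ < σ < 1`, sufficiently small holes around the `(n + 1)`-th roots of
`ρ ^ (n + 1)` stay in `{1 / 2 < ‖z‖ < σ}` and have harmonic measure at most `1 / (n + 2)`, as seen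
from the points outside of this annulus. -/
theorem exists_holes (n : ℕ) {ρ σ : ℝ} (h1 : 1 / 2 < ρ) (h2 : ρ < σ) (h3 : σ < 1) :
    ∃ δ, 0 < δ ∧ δ < ρ ^ (n + 1) ∧ δ < 1 ∧ ∀ w : ℂ, ‖w‖ < 1 → ‖w‖ ≤ 1 / 2 ∨ σ ≤ ‖w‖ →
      w ∈ Dom (n + 1) (ρ ^ (n + 1)) δ ∧
      Real.log ‖mob (ρ ^ (n + 1)) (w ^ (n + 1))‖ / Real.log δ ≤ 1 / (n + 2) := by
  have hρ : 0 < ρ := by linarith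
  have hm : n + 1 ≠ 0 := n.succ_ne_zero
  have p1 : (1 / 2 : ℝ) ^ (n + 1) < ρ ^ (n + 1) := pow_lt_pow_left₀ h1 (by norm_num) hm
  have p2 : ρ ^ (n + 1) < σ ^ (n + 1) := pow_lt_pow_left₀ h2 hρ.le hm
  have p3 : ρ ^ (n + 1) < 1 := pow_lt_one₀ hρ.le (h2.trans h3) hm
  have p4 : (0 : ℝ) < (1 / 2 : ℝ) ^ (n + 1) := by positivity
  obtain ⟨κ, hκ0, hκ1, hκ2⟩ : ∃ κ : ℝ, 0 < κ ∧ κ ≤ (ρ ^ (n + 1) - (1 / 2) ^ (n + 1)) / 2 ∧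
      κ ≤ (σ ^ (n + 1) - ρ ^ (n + 1)) / 2 :=
    ⟨_, lt_min (by linarith) (by linarith), min_le_left _ _, min_le_right _ _⟩
  have hκ : κ < 1 := by linarith
  have hδ : κ ^ (n + 2) < κ := by
    simpa using pow_lt_pow_right_of_lt_one₀ hκ0 hκ (show 1 < n + 2 by omega)
  refine ⟨κ ^ (n + 2), by positivity, by linarith, hδ.trans hκ, fun w hw hw' => ?_⟩
  have hB : κ ≤ ‖mob (ρ ^ (n + 1)) (w ^ (n + 1))‖ := by
    have hw1 : ‖w ^ (n + 1)‖ ≤ 1 := by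
      rw [norm_pow]
      exact pow_le_one₀ (norm_nonneg w) hw.le
    have h4 := le_norm_mob (pow_nonneg hρ.le (n + 1)) p3 hw1
    refine le_trans ?_ h4
    have hn : ‖((ρ ^ (n + 1) : ℝ) : ℂ)‖ = ρ ^ (n + 1) := by
      rw [Complex.norm_real, Real.norm_of_nonneg (by positivity)]
    rcases hw' with hw' | hw'
    · have h5 := norm_sub_norm_le ((ρ ^ (n + 1) : ℝ) : ℂ) (w ^ (n + 1))
      have h6 : ‖w‖ ^ (n + 1) ≤ (1 / 2) ^ (n + 1) := by gcongr
      rw [norm_sub_rev, hn, norm_pow] at h5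
      linarith
    · have h5 := norm_sub_norm_le (w ^ (n + 1)) ((ρ ^ (n + 1) : ℝ) : ℂ)
      have h6 : σ ^ (n + 1) ≤ ‖w‖ ^ (n + 1) :=
        pow_le_pow_left₀ (by linarith) hw' _
      rw [hn, norm_pow] at h5
      linarith
  refine ⟨⟨hw, hδ.trans_le hB⟩, ?_⟩
  have hlκ : Real.log κ < 0 := Real.log_neg hκ0 hκ
  have hlδ : Real.log (κ ^ (n + 2)) = (n + 2) * Real.log κ := by
    rw [Real.log_pow]
    push_cast
    ring
  have e : (1 : ℝ) / (n + 2) = Real.log κ / Real.log (κ ^ (n + 2)) := by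
    rw [hlδ]
    have : (n : ℝ) + 2 ≠ 0 := by positivity
    have := hlκ.ne
    field_simp
  rw [e]
  apply div_le_div_of_nonpos_of_le
  · rw [hlδ]
    exact mul_nonpos_of_nonneg_of_nonpos (by positivity) hlκ.le
  · exact Real.log_le_log hκ0 hB

/-- Every point of the unit circle is within `π / m` of an `m`-th root of unity; here scaled to the
circle through `x`. -/
theorem exists_root_near {m : ℕ} (hm : m ≠ 0) (x : ℂ) :
    ∃ ζ : ℂ, ζ ^ m = 1 ∧ ‖x - ‖x‖ * ζ‖ ≤ ‖x‖ * (Real.pi / m) := by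
  have hm0 : (0 : ℝ) < m := by exact_mod_cast Nat.pos_of_ne_zero hm
  have hmc : (m : ℂ) ≠ 0 := by exact_mod_cast hm
  have hπ := Real.pi_pos
  let k : ℤ := round (x.arg * m / (2 * Real.pi))
  let φ : ℝ := 2 * Real.pi * k / m
  have hφ : |x.arg - φ| ≤ Real.pi / m := by
    have h := abs_sub_round (x.arg * m / (2 * Real.pi))
    have e : x.arg - φ = (x.arg * m / (2 * Real.pi) - k) * (2 * Real.pi / m) := by
      simp only [φ]
      field_simp
    rw [e, abs_mul, abs_of_pos (show 0 < 2 * Real.pi / m by positivity)]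
    calc _ ≤ 1 / 2 * (2 * Real.pi / m) := by gcongr
      _ = Real.pi / m := by ring
  refine ⟨Complex.exp (φ * Complex.I), ?_, ?_⟩
  · rw [← Complex.exp_nat_mul, Complex.exp_eq_one_iff]
    refine ⟨k, ?_⟩
    simp only [φ]
    push_cast
    field_simp
  · have e : x - ‖x‖ * Complex.exp (φ * Complex.I)
        = ‖x‖ * Complex.exp (φ * Complex.I) *
          (Complex.exp (Complex.I * ((x.arg - φ : ℝ) : ℂ)) - 1) := by
      rw [mul_sub, mul_assoc, ← Complex.exp_add]
      conv_lhs => rw [← Complex.norm_mul_exp_arg_mul_I x]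
      simp only [Complex.norm_mul, Complex.norm_real, norm_norm, Complex.norm_exp_ofReal_mul_I,
        mul_one]
      push_cast
      ring_nf
    rw [e, norm_mul, norm_mul, Complex.norm_exp_ofReal_mul_I, Complex.norm_real, norm_norm, mul_one]
    gcongr
    exact (Real.norm_exp_I_mul_ofReal_sub_one_le).trans hφ

/-- The distance to the boundary of a point of the disc of radius `1 / 2` is controlled by
the distance to the nearest centre of a hole. -/
theorem infDist_frontier_dom_le {m : ℕ} (hm : m ≠ 0) {ρ δ : ℝ} (hδ : 0 < δ)
    {x : ℂ} (hx : x ∈ Dom m (ρ ^ m) δ) (hxρ : ‖x‖ ≤ ρ) :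
    infDist x (frontier (Dom m (ρ ^ m) δ)) ≤ Real.pi / m + (ρ - ‖x‖) := by
  obtain ⟨ζ, hζ, hxζ⟩ := exists_root_near hm x
  have hq : (ρ * ζ : ℂ) ∈ (Dom m (ρ ^ m) δ)ᶜ := by
    intro h
    have := h.2
    rw [mul_pow, hζ] at this
    simp [mob] at this
    linarith
  have hne : Dom m (ρ ^ m) δ ≠ Set.univ := by
    intro h
    rw [h] at hq
    exact hq trivial
  obtain ⟨y, hy, hxy⟩ := exists_mem_frontier_infDist_compl_eq_dist hx hne
  have hζ1 : ‖ζ‖ = 1 := by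
    have : ‖ζ‖ ^ m = 1 := by rw [← norm_pow, hζ, norm_one]
    exact (pow_eq_one_iff_of_nonneg (norm_nonneg _) hm).1 this
  have hx1 := hx.1
  calc infDist x (frontier (Dom m (ρ ^ m) δ)) ≤ dist x y := infDist_le_dist_of_mem hy
    _ = infDist x (Dom m (ρ ^ m) δ)ᶜ := hxy.symm
    _ ≤ dist x (ρ * ζ) := infDist_le_dist_of_mem hq
    _ = ‖(x - ‖x‖ * ζ) + ((‖x‖ - ρ : ℝ) : ℂ) * ζ‖ := by
      rw [dist_eq_norm]
      congr 1
      push_cast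
      ring
    _ ≤ ‖x‖ * (Real.pi / m) + (ρ - ‖x‖) := by
      refine (norm_add_le _ _).trans (add_le_add hxζ ?_)
      rw [norm_mul, hζ1, Complex.norm_real, mul_one, Real.norm_eq_abs, abs_sub_comm,
        abs_of_nonneg (by linarith)]
    _ ≤ _ := by
      gcongr
      exact mul_le_of_le_one_left (by positivity) hx1.le

/-! ### The two notions of convergence are incomparable -/

/-- Incomparability of the two notions of convergence: there are regular planar
domains `Ω n` having arbitrarily good common interior approximations with
`((1/2)𝔻, 0)`, while for every `w ∈ 𝔻` the harmonic measures of `Ω n` at `w`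
converge weakly to the harmonic measure of the unit disk `𝔻` at `w`. -/
theorem interiorApprox_vs_measureConv :
    ∃ (Ω : ℕ → Set ℂ) (μ : ℕ → ℂ → Measure ℂ) (ν : ℂ → Measure ℂ),
      (∀ n, IsOpen (Ω n) ∧ IsConnected (Ω n)) ∧
      (∀ n, ∀ z ∈ Ω n, IsHarmonicMeasure (Ω n) z (μ n z)) ∧
      (∀ n, IsRegularDomain (Ω n) (μ n)) ∧
      (∀ z ∈ ball (0 : ℂ) 1, IsHarmonicMeasure (ball (0 : ℂ) 1) z (ν z)) ∧
      frontier (ball (0 : ℂ) 1) ∩ frontier (ball (0 : ℂ) (1 / 2)) = ∅ ∧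
      CommonInteriorApprox Ω (fun _ => 0) (ball (0 : ℂ) (1 / 2)) 0 ∧
      ∀ w ∈ ball (0 : ℂ) 1, (∀ᶠ n in atTop, w ∈ Ω n) ∧
        WeakConv (fun n => μ n w) (ν w) := by
  have hn5 : ∀ n : ℕ, (0 : ℝ) < 1 / (n + 5) ∧ (1 : ℝ) / (n + 5) ≤ 1 / 5 := fun n =>
    ⟨by positivity, one_div_le_one_div_of_le (by norm_num) (by linarith [n.cast_nonneg (α := ℝ)])⟩
  -- The centres of the holes have absolute value `ρ n`, and `‖z‖ < σ n` on the holes.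
  let ρ : ℕ → ℝ := fun n => 1 / 2 + 1 / (n + 5)
  let σ : ℕ → ℝ := fun n => 1 / 2 + 2 * (1 / (n + 5))
  have hρ : ∀ n, 1 / 2 < ρ n := fun n => by simp only [ρ]; linarith [hn5 n]
  have hρσ : ∀ n, ρ n < σ n := fun n => by simp only [ρ, σ]; linarith [hn5 n]
  have hσ : ∀ n, σ n < 1 := fun n => by simp only [σ]; linarith [hn5 n]
  choose δ hδ0 hδρ hδ1 hδ using fun n => exists_holes n (hρ n) (hρσ n) (hσ n)
  have ha0 : ∀ n, 0 < ρ n ^ (n + 1) := fun n => pow_pos (by linarith [hρ n]) _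
  have ha : ∀ n, |ρ n ^ (n + 1)| < 1 := fun n => by
    rw [abs_of_pos (ha0 n)]
    exact pow_lt_one₀ (by linarith [hρ n]) ((hρσ n).trans (hσ n)) n.succ_ne_zero
  have haδ : ∀ n, δ n < |ρ n ^ (n + 1)| := fun n => by
    rw [abs_of_pos (ha0 n)]
    exact hδρ n
  let Ω : ℕ → Set ℂ := fun n => Dom (n + 1) (ρ n ^ (n + 1)) (δ n)
  have hO : ∀ n, IsOpen (Ω n) := fun n => isOpen_dom (ha n) _ _
  have hC : ∀ n, IsConnected (Ω n) := fun n =>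
    isConnected_dom n.succ_ne_zero (ha n) (hδ0 n).le (haδ n)
  choose μ hμ hμr using fun n => exists_regular_family (hO n) (isBounded_dom _ _ _) (hC n)
    (hasPeaks_dom n.succ_ne_zero (ha n) (hδ0 n) (haδ n))
  have hν' : ∀ z : ℂ, ∃ ν : Measure ℂ, z ∈ ball (0 : ℂ) 1 → Reproduces (ball 0 1) z ν := by
    intro z
    by_cases hz : z ∈ ball (0 : ℂ) 1
    · obtain ⟨ν, hν⟩ := exists_reproduces isOpen_ball isBounded_ball hz
      exact ⟨ν, fun _ => hν⟩
    · exact ⟨0, fun h => absurd h hz⟩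
  choose ν hν using hν'
  have hlim : Tendsto (fun n : ℕ => (1 : ℝ) / (n + 5)) atTop (𝓝 0) := by
    have := (tendsto_add_atTop_iff_nat 5).2 (tendsto_one_div_atTop_nhds_zero_nat (𝕜 := ℝ))
    simpa using this
  refine ⟨Ω, μ, ν, fun n => ⟨hO n, hC n⟩, fun n z hz => (hμ n z hz).isHarmonicMeasure, hμr,
    fun z hz => (hν z hz).isHarmonicMeasure, ?_, ⟨tendsto_const_nhds, fun ε hε => ?_⟩,
    fun w hw => ?_⟩
  · rw [frontier_ball _ one_ne_zero, frontier_ball _ (by norm_num)]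
    ext z
    simp only [Set.mem_inter_iff, mem_sphere_zero_iff_norm, Set.mem_empty_iff_false, iff_false]
    rintro ⟨h1, h2⟩
    rw [h1] at h2
    norm_num at h2
  · obtain ⟨η, hη0, hηε, hη1⟩ : ∃ η : ℝ, 0 < η ∧ η ≤ ε / 4 ∧ η ≤ 1 / 4 :=
      ⟨_, lt_min (by positivity) (by norm_num), min_le_left _ _, min_le_right _ _⟩
    have hlim2 : Tendsto (fun n : ℕ => Real.pi * (1 / ((n : ℝ) + 1)) + 1 / ((n : ℝ) + 5))
        atTop (𝓝 0) := by
      simpa using (tendsto_one_div_add_atTop_nhds_zero_nat (𝕜 := ℝ)).const_mul Real.pi |>.add hlim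
    obtain ⟨N, hN⟩ := eventually_atTop.1 (hlim2.eventually (gt_mem_nhds (half_pos hε)))
    have hKn : ∀ x ∈ closedBall (0 : ℂ) (1 / 2 - η), ‖x‖ ≤ 1 / 2 - η := fun x hx =>
      mem_closedBall_zero_iff.1 hx
    have hKΩ : ∀ n, closedBall (0 : ℂ) (1 / 2 - η) ⊆ Ω n := fun n x hx => by
      have := hKn x hx
      exact (hδ n x (by linarith) (Or.inl (by linarith))).1
    refine ⟨N, closedBall 0 (1 / 2 - η), isClosed_closedBall,
      ⟨⟨0, mem_closedBall_self (by linarith)⟩, (convex_closedBall _ _).isPreconnected⟩,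
      mem_closedBall_self (by linarith), closedBall_subset_ball (by linarith),
      fun n _ => hKΩ n, fun x hx => ?_⟩
    rw [frontier_closedBall _ (by linarith), mem_sphere_zero_iff_norm] at hx
    have hxK : x ∈ closedBall (0 : ℂ) (1 / 2 - η) := mem_closedBall_zero_iff.2 hx.le
    constructor
    · rw [frontier_ball _ (by norm_num)]
      -- The nearest point of the circle is the radial projection `t * x`.
      let t : ℝ := 1 / 2 / (1 / 2 - η)
      have ht : 0 ≤ t := div_nonneg (by norm_num) (by linarith)
      have htη : t * (1 / 2 - η) = 1 / 2 := div_mul_cancel₀ _ (by linarith)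
      have hy : (t * x : ℂ) ∈ sphere (0 : ℂ) (1 / 2) := by
        rw [mem_sphere_zero_iff_norm, norm_mul, hx, Complex.norm_real, Real.norm_of_nonneg ht, htη]
      have hd : dist x (t * x) = η := by
        have e : x - t * x = ((1 - t : ℝ) : ℂ) * x := by push_cast; ring
        have ht1 : 1 - t ≤ 0 := by nlinarith
        rw [dist_eq_norm, e, norm_mul, Complex.norm_real, Real.norm_of_nonpos ht1, hx]
        linarith
      exact (infDist_le_dist_of_mem hy).trans_lt (by linarith)
    · intro n hn
      have h1 := infDist_frontier_dom_le n.succ_ne_zero (hδ0 n) (hKΩ n hxK)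
        (by linarith [hρ n])
      have h2 := hN n hn
      refine h1.trans_lt ?_
      rw [hx]
      push_cast
      simp only [ρ]
      rw [mul_one_div] at h2
      linarith
  · have hw1 : ‖w‖ < 1 := mem_ball_zero_iff.1 hw
    have hev : ∀ᶠ n in atTop, ‖w‖ ≤ 1 / 2 ∨ σ n ≤ ‖w‖ := by
      rcases le_or_gt ‖w‖ (1 / 2) with h | h
      · exact Eventually.of_forall fun n => Or.inl h
      · have : Tendsto σ atTop (𝓝 (1 / 2)) := by
          have h0 := (hlim.const_mul 2).const_add (1 / 2 : ℝ)
          rwa [mul_zero, add_zero] at h0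
        filter_upwards [this.eventually (gt_mem_nhds h)] with n hn using Or.inr hn.le
    refine ⟨hev.mono fun n hn => (hδ n w hw1 hn).1, fun f => ?_⟩
    rw [Metric.tendsto_atTop']
    intro ε hε
    obtain ⟨P, hP, hfP⟩ := exists_approx f f.continuous (show 0 < ε / 3 by positivity)
    obtain ⟨C, hC⟩ := (isCompact_closedBall (0 : ℂ) 1).exists_bound_of_continuousOn
      (f := fun z => f z - (P z).re)
      (f.continuous.sub (Complex.continuous_re.comp hP.continuous)).continuousOn
    have hC' : ∀ z : ℂ, ‖z‖ ≤ 1 → |f z - (P z).re| ≤ C := fun z hz =>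
      hC z (mem_closedBall_zero_iff.2 hz)
    have hC0 : 0 ≤ C := (abs_nonneg _).trans (hC' 0 (by simp))
    have hd := estimate_disc (hν w hw) f.continuous hP hfP
    have hl : Tendsto (fun n : ℕ => C * (1 / ((n : ℝ) + 2))) atTop (𝓝 0) := by
      have := (tendsto_add_atTop_iff_nat 2).2 (tendsto_one_div_atTop_nhds_zero_nat (𝕜 := ℝ))
      simpa using this.const_mul C
    obtain ⟨N, hN⟩ := eventually_atTop.1
      (hev.and (hl.eventually (gt_mem_nhds (show 0 < ε / 3 by positivity))))
    refine ⟨N, fun n hn => ?_⟩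
    obtain ⟨h1, h2⟩ := hN n hn.le
    obtain ⟨h3, h4⟩ := hδ n w hw1 h1
    have h5 := estimate_dom (ha n) (hδ0 n) (hδ1 n) (hμ n w h3) f.continuous hP
      (show 0 ≤ ε / 3 by positivity) hfP hC'
    have h6 := mul_le_mul_of_nonneg_left h4 hC0
    rw [Real.dist_eq]
    rw [abs_le] at hd h5
    rw [abs_lt]
    constructor <;> linarith
end
end
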